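/- arXiv:2601.19147 — 5 statements merged into one kernel-verified Lean document; each statement's English description precedes it below -/
import Mathlib

section
/- Let W be a rectilinear polygonal environment with free space F, and let s and t be free configurations such that (s,t) is reachable. Then there exists an optimal (s,t)-plan that is both rectilinear and decoupled. -/
open Set
open scoped ENNReal

noncomputable section

/-- The ℓ∞ norm of a point of `ℝ²`. -/
def linf (p : ℝ × ℝ) : ℝ := max |p.1| |p.2|

/-- The ℓ₁ norm of a point of `ℝ²`. -/
def l1 (p : ℝ × ℝ) : ℝ := |p.1| + |p.2|

/-- The Euclidean distance between two points of `ℝ²`. -/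
def euclDist (p q : ℝ × ℝ) : ℝ := Real.sqrt ((p.1 - q.1) ^ 2 + (p.2 - q.2) ^ 2)

/-- A closed axis-aligned rectangle with nonempty interior. -/
def IsClosedAxisRect (S : Set (ℝ × ℝ)) : Prop :=
  ∃ a b c d : ℝ, a < b ∧ c < d ∧ S = Icc a b ×ˢ Icc c d

/-- A rectilinear polygonal environment: a nonempty compact subset of the plane that is a
finite union of closed axis-aligned rectangles with nonempty interior, and that equals the
closure of its interior. -/
def IsRectilinearEnv (W : Set (ℝ × ℝ)) : Prop :=
  W.Nonempty ∧ IsCompact W ∧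
    (∃ 𝓡 : Finset (Set (ℝ × ℝ)), (∀ S ∈ 𝓡, IsClosedAxisRect S) ∧ W = ⋃ S ∈ 𝓡, S) ∧
    W = closure (interior W)

/-- The free space of a workspace `W`: placements of the center of a closed axis-aligned
unit square keeping the square inside `W`. -/
def freeSpace (W : Set (ℝ × ℝ)) : Set (ℝ × ℝ) :=
  {p | ∀ q : ℝ × ℝ, linf q ≤ 1 / 2 → p + q ∈ W}

/-- A free configuration of the two robots. -/
def FreeConf (F : Set (ℝ × ℝ)) (c : (ℝ × ℝ) × (ℝ × ℝ)) : Prop :=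
  c.1 ∈ F ∧ c.2 ∈ F ∧ 1 ≤ linf (c.1 - c.2)

/-- The ℓ₁-length (total variation w.r.t. the metric induced by the ℓ₁-norm) of a planar
path on a set of times. -/
def l1VarOn (γ : ℝ → ℝ × ℝ) (s : Set ℝ) : ℝ≥0∞ :=
  eVariationOn (fun t => (WithLp.equiv 1 (ℝ × ℝ)).symm (γ t)) s

/-- An `(s,t)`-plan: a continuous map on `[0,1]` from `s` to `t`. -/
def IsPlan (s t : (ℝ × ℝ) × (ℝ × ℝ)) (pln : ℝ → (ℝ × ℝ) × (ℝ × ℝ)) : Prop :=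
  ContinuousOn pln (Icc 0 1) ∧ pln 0 = s ∧ pln 1 = t

/-- A plan is feasible if every configuration along it is free. -/
def Feasible (F : Set (ℝ × ℝ)) (pln : ℝ → (ℝ × ℝ) × (ℝ × ℝ)) : Prop :=
  ∀ lam ∈ Icc (0 : ℝ) 1, FreeConf F (pln lam)

/-- The cost of a plan: the sum of the ℓ₁-lengths of the two robot paths. -/
def planCost (pln : ℝ → (ℝ × ℝ) × (ℝ × ℝ)) : ℝ≥0∞ :=
  l1VarOn (fun t => (pln t).1) (Icc 0 1) + l1VarOn (fun t => (pln t).2) (Icc 0 1)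

/-- An optimal `(s,t)`-plan: feasible, and of cost at most that of every feasible plan. -/
def IsOptimalPlan (F : Set (ℝ × ℝ)) (s t : (ℝ × ℝ) × (ℝ × ℝ))
    (pln : ℝ → (ℝ × ℝ) × (ℝ × ℝ)) : Prop :=
  IsPlan s t pln ∧ Feasible F pln ∧
    ∀ pln', IsPlan s t pln' → Feasible F pln' → planCost pln ≤ planCost pln'

/-- A decoupled plan: `[0,1]` splits into finitely many subintervals on each of which
one of the two robots is parked. -/
def IsDecoupled (pln : ℝ → (ℝ × ℝ) × (ℝ × ℝ)) : Prop :=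
  ∃ (n : ℕ) (τ : ℕ → ℝ), τ 0 = 0 ∧ τ n = 1 ∧ (∀ i, i < n → τ i ≤ τ (i + 1)) ∧
    ∀ i, i < n →
      (∀ a ∈ Icc (τ i) (τ (i + 1)), (pln a).1 = (pln (τ i)).1) ∨
      (∀ a ∈ Icc (τ i) (τ (i + 1)), (pln a).2 = (pln (τ i)).2)

/-- A rectilinear path: piecewise linear, with every linear piece horizontal or vertical. -/
def IsRectilinearPath (γ : ℝ → ℝ × ℝ) : Prop :=
  ∃ (n : ℕ) (τ : ℕ → ℝ), τ 0 = 0 ∧ τ n = 1 ∧ (∀ i, i < n → τ i ≤ τ (i + 1)) ∧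
    ∀ i, i < n → ∃ v : ℝ × ℝ, (v.1 = 0 ∨ v.2 = 0) ∧
      ∀ a ∈ Icc (τ i) (τ (i + 1)), γ a = γ (τ i) + (a - τ i) • v

/-- A rectilinear plan: both robot paths are rectilinear. -/
def IsRectilinearPlan (pln : ℝ → (ℝ × ℝ) × (ℝ × ℝ)) : Prop :=
  IsRectilinearPath (fun t => (pln t).1) ∧ IsRectilinearPath (fun t => (pln t).2)

/-- An alternating path: horizontal and vertical pieces (possibly of zero length)
alternate. -/
def IsAlternatingPath (γ : ℝ → ℝ × ℝ) : Prop :=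
  ∃ (n : ℕ) (τ : ℕ → ℝ) (d : ℕ → Bool), τ 0 = 0 ∧ τ n = 1 ∧
    (∀ i, i < n → τ i ≤ τ (i + 1)) ∧
    (∀ i, i + 1 < n → d (i + 1) = !d i) ∧
    ∀ i, i < n → ∃ v : ℝ × ℝ,
      (if d i = true then v.2 = 0 else v.1 = 0) ∧
      ∀ a ∈ Icc (τ i) (τ (i + 1)), γ a = γ (τ i) + (a - τ i) • v

/-- An alternating plan. -/
def IsAlternatingPlan (pln : ℝ → (ℝ × ℝ) × (ℝ × ℝ)) : Prop :=
  IsAlternatingPath (fun t => (pln t).1) ∧ IsAlternatingPath (fun t => (pln t).2)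

/-- `y` is the height of a horizontal edge of `∂F`. -/
def IsHorizEdgeY (F : Set (ℝ × ℝ)) (y : ℝ) : Prop :=
  ∃ a b : ℝ, a < b ∧ (Icc a b ×ˢ ({y} : Set ℝ)) ⊆ frontier F

/-- `x` is the abscissa of a vertical edge of `∂F`. -/
def IsVertEdgeX (F : Set (ℝ × ℝ)) (x : ℝ) : Prop :=
  ∃ a b : ℝ, a < b ∧ (({x} : Set ℝ) ×ˢ Icc a b) ⊆ frontier F

/-- `y` is the height of a horizontal `i`-line for some `i ≤ k` (w.r.t. the free space `F`
and the set `P` of the four source/target points). -/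
def IsHorizLineY (F : Set (ℝ × ℝ)) (P : Set (ℝ × ℝ)) (k : ℕ) (y : ℝ) : Prop :=
  ∃ i : ℕ, i ≤ k ∧
    ((∃ y₀ : ℝ, IsHorizEdgeY F y₀ ∧ |y - y₀| = (i : ℝ)) ∨ ∃ p ∈ P, |y - p.2| = (i : ℝ))

/-- `x` is the abscissa of a vertical `i`-line for some `i ≤ k`. -/
def IsVertLineX (F : Set (ℝ × ℝ)) (P : Set (ℝ × ℝ)) (k : ℕ) (x : ℝ) : Prop :=
  ∃ i : ℕ, i ≤ k ∧
    ((∃ x₀ : ℝ, IsVertEdgeX F x₀ ∧ |x - x₀| = (i : ℝ)) ∨ ∃ p ∈ P, |x - p.1| = (i : ℝ))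

/-- A grid point: a point of `F` lying on a horizontal grid line and a vertical grid line. -/
def IsGridPoint (F : Set (ℝ × ℝ)) (P : Set (ℝ × ℝ)) (u : ℝ × ℝ) : Prop :=
  u ∈ F ∧ IsHorizLineY F P 2 u.2 ∧ IsVertLineX F P 2 u.1

/-- A grid edge: a closed segment in `F` joining two grid points on a common grid line, with
no grid point in its relative interior. -/
def IsGridEdge (F P : Set (ℝ × ℝ)) (u v : ℝ × ℝ) : Prop :=
  IsGridPoint F P u ∧ IsGridPoint F P v ∧ (u.1 = v.1 ∨ u.2 = v.2) ∧
    segment ℝ u v ⊆ F ∧ ∀ w ∈ openSegment ℝ u v, ¬ IsGridPoint F P w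

/-- A vertex of the configuration graph. -/
def ConfVertex (F P : Set (ℝ × ℝ)) (u : (ℝ × ℝ) × (ℝ × ℝ)) : Prop :=
  IsGridPoint F P u.1 ∧ IsGridPoint F P u.2 ∧ 1 ≤ linf (u.1 - u.2)

/-- An edge of the configuration graph. -/
def ConfEdge (F P : Set (ℝ × ℝ)) (u v : (ℝ × ℝ) × (ℝ × ℝ)) : Prop :=
  ConfVertex F P u ∧ ConfVertex F P v ∧
    ((u.1 = v.1 ∧ IsGridEdge F P u.2 v.2) ∨ (u.2 = v.2 ∧ IsGridEdge F P u.1 v.1))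

/-- A path in `S` from `p` to `q`. -/
def IsPathIn (S : Set (ℝ × ℝ)) (p q : ℝ × ℝ) (γ : ℝ → ℝ × ℝ) : Prop :=
  ContinuousOn γ (Icc 0 1) ∧ γ 0 = p ∧ γ 1 = q ∧ ∀ t ∈ Icc (0 : ℝ) 1, γ t ∈ S

/-- The ℓ₁-length of a path parameterized over `[0,1]`. -/
def pathLen (γ : ℝ → ℝ × ℝ) : ℝ≥0∞ := l1VarOn γ (Icc 0 1)

/-- A shortest path in `S` from `p` to `q` (w.r.t. ℓ₁-length). -/
def IsShortestPathIn (S : Set (ℝ × ℝ)) (p q : ℝ × ℝ) (γ : ℝ → ℝ × ℝ) : Prop :=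
  IsPathIn S p q γ ∧ ∀ γ', IsPathIn S p q γ' → pathLen γ ≤ pathLen γ'

/-- An x-monotone path. -/
def XMonotone (γ : ℝ → ℝ × ℝ) : Prop :=
  MonotoneOn (fun t => (γ t).1) (Icc 0 1) ∨ AntitoneOn (fun t => (γ t).1) (Icc 0 1)

/-- A y-monotone path. -/
def YMonotone (γ : ℝ → ℝ × ℝ) : Prop :=
  MonotoneOn (fun t => (γ t).2) (Icc 0 1) ∨ AntitoneOn (fun t => (γ t).2) (Icc 0 1)

/-- An xy-monotone path. -/
def XYMonotone (γ : ℝ → ℝ × ℝ) : Prop := XMonotone γ ∧ YMonotone γ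

/-- The union of the primary horizontal lines (horizontal 0-lines and 1-lines). -/
def primaryHorizSet (F P : Set (ℝ × ℝ)) : Set (ℝ × ℝ) :=
  {p | IsHorizLineY F P 1 p.2}

/-- A corridor: the closure of a connected component of `F` minus the primary horizontal
lines. -/
def IsCorridor (F P : Set (ℝ × ℝ)) (R : Set (ℝ × ℝ)) : Prop :=
  ∃ c ∈ F \ primaryHorizSet F P,
    R = closure (connectedComponentIn (F \ primaryHorizSet F P) c)

/-- `C` is a connected component of `S`. -/
def IsCompOf (S C : Set (ℝ × ℝ)) : Prop := ∃ c ∈ S, C = connectedComponentIn S c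

/-- An x-separated configuration. -/
def XSep (c : (ℝ × ℝ) × (ℝ × ℝ)) : Prop := 1 ≤ |c.1.1 - c.2.1|

/-- A y-separated configuration. -/
def YSep (c : (ℝ × ℝ) × (ℝ × ℝ)) : Prop := 1 ≤ |c.1.2 - c.2.2|

/-- Two configurations have the same x-order. -/
def SameXOrder (c d : (ℝ × ℝ) × (ℝ × ℝ)) : Prop :=
  Real.sign (c.1.1 - c.2.1) = Real.sign (d.1.1 - d.2.1)

/-- Two configurations have the same y-order. -/
def SameYOrder (c d : (ℝ × ℝ) × (ℝ × ℝ)) : Prop :=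
  Real.sign (c.1.2 - c.2.2) = Real.sign (d.1.2 - d.2.2)

/-- During `[a,b]` the path `γ` traverses (affinely) a straight axis-parallel segment
contained in `F` whose endpoints are grid points. -/
def MoveSeg (F P : Set (ℝ × ℝ)) (γ : ℝ → ℝ × ℝ) (a b : ℝ) : Prop :=
  IsGridPoint F P (γ a) ∧ IsGridPoint F P (γ b) ∧
    segment ℝ (γ a) (γ b) ⊆ F ∧
    ∃ v : ℝ × ℝ, (v.1 = 0 ∨ v.2 = 0) ∧ ∀ t ∈ Icc a b, γ t = γ a + (t - a) • v

/-- A canonical-grid plan: a rectilinear decoupled plan that is a finite concatenation of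
moves in each of which one robot is parked at a grid point while the other traverses a
straight axis-parallel segment of the grid contained in `F`; in particular, every
breakpoint of either robot path is a grid point. -/
def IsCanonicalGridPlan (F P : Set (ℝ × ℝ)) (pln : ℝ → (ℝ × ℝ) × (ℝ × ℝ)) : Prop :=
  IsRectilinearPlan pln ∧ IsDecoupled pln ∧
    ∃ (n : ℕ) (τ : ℕ → ℝ), τ 0 = 0 ∧ τ n = 1 ∧ (∀ i, i < n → τ i ≤ τ (i + 1)) ∧
      ∀ i, i < n →
        (IsGridPoint F P (pln (τ i)).1 ∧
            (∀ a ∈ Icc (τ i) (τ (i + 1)), (pln a).1 = (pln (τ i)).1) ∧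
            MoveSeg F P (fun t => (pln t).2) (τ i) (τ (i + 1))) ∨
        (IsGridPoint F P (pln (τ i)).2 ∧
            (∀ a ∈ Icc (τ i) (τ (i + 1)), (pln a).2 = (pln (τ i)).2) ∧
            MoveSeg F P (fun t => (pln t).1) (τ i) (τ (i + 1)))

/-- A path in the configuration graph from `s` to `t` with `k` edges. -/
def IsGraphPath (F P : Set (ℝ × ℝ)) (s t : (ℝ × ℝ) × (ℝ × ℝ)) (k : ℕ)
    (u : ℕ → (ℝ × ℝ) × (ℝ × ℝ)) : Prop :=
  u 0 = s ∧ u k = t ∧ ∀ j, j < k → ConfEdge F P (u j) (u (j + 1))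

/-- The total weight (ℓ₁-distance in `ℝ⁴`) of a path in the configuration graph. -/
def graphPathWeight (k : ℕ) (u : ℕ → (ℝ × ℝ) × (ℝ × ℝ)) : ℝ :=
  ∑ j ∈ Finset.range k, (l1 ((u (j + 1)).1 - (u j).1) + l1 ((u (j + 1)).2 - (u j).2))

/-- `pln` traverses the edges of the graph path `u` one after another (linearly
interpolating along each edge). -/
def IsEdgeTraversal (pln : ℝ → (ℝ × ℝ) × (ℝ × ℝ)) (k : ℕ)
    (u : ℕ → (ℝ × ℝ) × (ℝ × ℝ)) : Prop :=
  (k = 0 → ∀ a ∈ Icc (0 : ℝ) 1, pln a = u 0) ∧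
    ∀ j, j < k → ∀ a ∈ Icc ((j : ℝ) / k) (((j : ℝ) + 1) / k),
      pln a = u j + ((a - (j : ℝ) / k) * k) • (u (j + 1) - u j)

/-- A blocked pair for the corridor `[xlo,xhi] × [ylo,yhi]`. -/
def BlockedPair (F : Set (ℝ × ℝ)) (xlo xhi ylo yhi : ℝ) (u v : ℝ × ℝ) : Prop :=
  ∃ ρ ρ' edge : Set (ℝ × ℝ),
    ((ρ = Ico (xlo - 1) xlo ×ˢ Ico (ylo - 1) ylo ∧
        ρ' = Ico (xlo - 1) xlo ×ˢ Ioc yhi (yhi + 1) ∧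
        edge = ({xlo} : Set ℝ) ×ˢ Icc (ylo - 1) (yhi + 1)) ∨
      (ρ = Ioc xhi (xhi + 1) ×ˢ Ico (ylo - 1) ylo ∧
        ρ' = Ioc xhi (xhi + 1) ×ˢ Ioc yhi (yhi + 1) ∧
        edge = ({xhi} : Set ℝ) ×ˢ Icc (ylo - 1) (yhi + 1))) ∧
    ∃ φ φ' : Set (ℝ × ℝ), IsCompOf (ρ ∩ F) φ ∧ IsCompOf (ρ' ∩ F) φ' ∧
      (closure φ ∩ edge).Nonempty ∧ (closure φ' ∩ edge).Nonempty ∧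
      ((u ∈ φ ∧ v ∈ φ') ∨ (u ∈ φ' ∧ v ∈ φ))

/-- `[ν₁,ν₂] ⊆ [lam1,lam2]` is an unsafe interval for the plan `pln` w.r.t. the influence
region `IR`. -/
def IsUnsafeInterval (IR : Set (ℝ × ℝ)) (pln : ℝ → (ℝ × ℝ) × (ℝ × ℝ))
    (lam1 lam2 ν₁ ν₂ : ℝ) : Prop :=
  lam1 ≤ ν₁ ∧ ν₁ ≤ ν₂ ∧ ν₂ ≤ lam2 ∧
    (∀ ν ∈ Icc ν₁ ν₂, (pln ν).2 ∈ IR ∧ YSep (pln ν)) ∧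
    (∀ a b : ℝ, lam1 ≤ a → a ≤ ν₁ → ν₂ ≤ b → b ≤ lam2 →
      (∀ ν ∈ Icc a b, (pln ν).2 ∈ IR ∧ YSep (pln ν)) → a = ν₁ ∧ b = ν₂) ∧
    ∃ ν ∈ Icc ν₁ ν₂, ¬ XSep (pln ν)


/-! ### Finite unions of products of intervals -/

/-- Finite unions of products of convex subsets of the line. -/
inductive RC : Set (ℝ × ℝ) → Prop
  | empty : RC ∅
  | box (I J : Set ℝ) (hI : Convex ℝ I) (hJ : Convex ℝ J) : RC (I ×ˢ J)
  | union (A B : Set (ℝ × ℝ)) (hA : RC A) (hB : RC B) : RC (A ∪ B)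

lemma RC.inter_box {A : Set (ℝ × ℝ)} (hA : RC A) {I J : Set ℝ} (hI : Convex ℝ I)
    (hJ : Convex ℝ J) : RC (A ∩ I ×ˢ J) := by
  induction hA with
  | empty => rw [Set.empty_inter]; exact RC.empty
  | box I' J' hI' hJ' =>
    rw [Set.prod_inter_prod]
    exact RC.box _ _ (hI'.inter hI) (hJ'.inter hJ)
  | union A B _ _ ihA ihB =>
    rw [Set.union_inter_distrib_right]
    exact RC.union _ _ ihA ihB

lemma RC.inter {A B : Set (ℝ × ℝ)} (hA : RC A) (hB : RC B) : RC (A ∩ B) := by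
  induction hB with
  | empty => rw [Set.inter_empty]; exact RC.empty
  | box I J hI hJ => exact hA.inter_box hI hJ
  | union B C _ _ ihB ihC =>
    rw [Set.inter_union_distrib_left]
    exact RC.union _ _ ihB ihC

lemma compl_convex (I : Set ℝ) (hI : Convex ℝ I) :
    ∃ A B : Set ℝ, Convex ℝ A ∧ Convex ℝ B ∧ Iᶜ = A ∪ B := by
  refine ⟨{x | ∀ u ∈ I, x < u}, {x | ∀ u ∈ I, u < x}, ?_, ?_, ?_⟩
  · refine Set.OrdConnected.convex ?_
    exact ⟨fun x _ y hy z hz u hu => lt_of_le_of_lt hz.2 (hy u hu)⟩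
  · refine Set.OrdConnected.convex ?_
    exact ⟨fun x hx y _ z hz u hu => lt_of_lt_of_le (hx u hu) hz.1⟩
  · ext x
    constructor
    · intro hx
      by_contra hc
      simp only [Set.mem_union, Set.mem_ofPred_eq, not_or, not_forall, not_lt] at hc
      obtain ⟨⟨u, hu, hux⟩, v, hv, hxv⟩ := hc
      exact hx (hI.ordConnected.out hu hv ⟨hux, hxv⟩)
    · rintro (hx | hx) hxI
      · exact lt_irrefl _ (hx x hxI)
      · exact lt_irrefl _ (hx x hxI)

lemma RC.compl {A : Set (ℝ × ℝ)} (hA : RC A) : RC Aᶜ := by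
  induction hA with
  | empty =>
    rw [Set.compl_empty, ← Set.univ_prod_univ]
    exact RC.box _ _ convex_univ convex_univ
  | box I J hI hJ =>
    obtain ⟨A, B, hA, hB, hAB⟩ := compl_convex I hI
    obtain ⟨C, D, hC, hD, hCD⟩ := compl_convex J hJ
    have : (I ×ˢ J)ᶜ = ((A ×ˢ univ) ∪ (B ×ˢ univ)) ∪ ((univ ×ˢ C) ∪ (univ ×ˢ D)) := by
      rw [← Set.union_prod, ← Set.prod_union, ← hAB, ← hCD, Set.compl_prod_eq_union]
    rw [this]
    exact RC.union _ _
      (RC.union _ _ (RC.box _ _ hA convex_univ) (RC.box _ _ hB convex_univ))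
      (RC.union _ _ (RC.box _ _ convex_univ hC) (RC.box _ _ convex_univ hD))
  | union A B _ _ ihA ihB =>
    rw [Set.compl_union]
    exact ihA.inter ihB

/-- Dilation of a planar set by the unit square. -/
def dil (S : Set (ℝ × ℝ)) : Set (ℝ × ℝ) := {p | ∃ q : ℝ × ℝ, linf q ≤ 1 / 2 ∧ p + q ∈ S}

/-- Dilation of a subset of the line by the unit interval. -/
def dilLine (I : Set ℝ) : Set ℝ := {x | ∃ h : ℝ, |h| ≤ 1 / 2 ∧ x + h ∈ I}

lemma convex_dilLine {I : Set ℝ} (hI : Convex ℝ I) : Convex ℝ (dilLine I) := by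
  rintro x ⟨h, hh, hx⟩ y ⟨k, hk, hy⟩ a b ha hb hab
  refine ⟨a * h + b * k, ?_, ?_⟩
  · rw [abs_le] at *
    constructor <;> nlinarith
  · have := hI hx hy ha hb hab
    simp only [smul_eq_mul] at this ⊢
    convert this using 1
    ring

lemma RC.dil {A : Set (ℝ × ℝ)} (hA : RC A) : RC (dil A) := by
  induction hA with
  | empty =>
    have : _root_.dil ∅ = ∅ := by
      ext p; simp [_root_.dil]
    rw [this]; exact RC.empty
  | box I J hI hJ =>
    have : _root_.dil (I ×ˢ J) = dilLine I ×ˢ dilLine J := by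
      ext p
      constructor
      · rintro ⟨q, hq, hp⟩
        rw [linf, max_le_iff] at hq
        exact ⟨⟨q.1, hq.1, hp.1⟩, ⟨q.2, hq.2, hp.2⟩⟩
      · rintro ⟨⟨h, hh, hx⟩, ⟨k, hk, hy⟩⟩
        exact ⟨(h, k), max_le hh hk, ⟨hx, hy⟩⟩
    rw [this]
    exact RC.box _ _ (convex_dilLine hI) (convex_dilLine hJ)
  | union A B _ _ ihA ihB =>
    have : _root_.dil (A ∪ B) = _root_.dil A ∪ _root_.dil B := by
      ext p
      constructor
      · rintro ⟨q, hq, hp | hp⟩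
        · exact Or.inl ⟨q, hq, hp⟩
        · exact Or.inr ⟨q, hq, hp⟩
      · rintro (⟨q, hq, hp⟩ | ⟨q, hq, hp⟩)
        · exact ⟨q, hq, Or.inl hp⟩
        · exact ⟨q, hq, Or.inr hp⟩
    rw [this]
    exact RC.union _ _ ihA ihB

lemma freeSpace_eq (W : Set (ℝ × ℝ)) : freeSpace W = (dil Wᶜ)ᶜ := by
  ext p
  simp [freeSpace, dil]

lemma rc_env {W : Set (ℝ × ℝ)} (hW : IsRectilinearEnv W) : RC W := by
  obtain ⟨-, -, ⟨R, hR, rfl⟩, -⟩ := hW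
  induction R using Finset.induction_on with
  | empty => simpa using RC.empty
  | insert S R hS ih =>
    rw [Finset.set_biUnion_insert]
    refine RC.union _ _ ?_ (ih fun T hT => hR T (Finset.mem_insert_of_mem hT))
    obtain ⟨a, b, c, d, -, -, rfl⟩ := hR S (Finset.mem_insert_self _ _)
    exact RC.box _ _ (convex_Icc _ _) (convex_Icc _ _)

lemma RC.cover {A : Set (ℝ × ℝ)} (hA : RC A) :
    ∃ B : Finset (Set ℝ × Set ℝ),
      (∀ b ∈ B, Convex ℝ b.1 ∧ Convex ℝ b.2 ∧ IsClosed b.1 ∧ IsClosed b.2 ∧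
        b.1 ×ˢ b.2 ⊆ closure A) ∧
      ∀ x ∈ A, ∃ b ∈ B, x ∈ b.1 ×ˢ b.2 := by
  classical
  induction hA with
  | empty => exact ⟨∅, by simp, by simp⟩
  | box I J hI hJ =>
    refine ⟨{(closure I, closure J)}, ?_, ?_⟩
    · intro b hb
      rw [Finset.mem_singleton] at hb
      subst hb
      refine ⟨hI.closure, hJ.closure, isClosed_closure, isClosed_closure, ?_⟩
      rw [closure_prod_eq]
    · intro x hx
      exact ⟨_, Finset.mem_singleton_self _, subset_closure hx.1, subset_closure hx.2⟩
  | union A B _ _ ihA ihB =>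
    obtain ⟨U, hU, hU'⟩ := ihA
    obtain ⟨V, hV, hV'⟩ := ihB
    refine ⟨U ∪ V, ?_, ?_⟩
    · intro b hb
      rcases Finset.mem_union.1 hb with h | h
      · obtain ⟨h1, h2, h3, h4, h5⟩ := hU b h
        exact ⟨h1, h2, h3, h4, h5.trans (closure_mono Set.subset_union_left)⟩
      · obtain ⟨h1, h2, h3, h4, h5⟩ := hV b h
        exact ⟨h1, h2, h3, h4, h5.trans (closure_mono Set.subset_union_right)⟩
    · rintro x (hx | hx)
      · obtain ⟨b, hb, hxb⟩ := hU' x hx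
        exact ⟨b, Finset.mem_union_left _ hb, hxb⟩
      · obtain ⟨b, hb, hxb⟩ := hV' x hx
        exact ⟨b, Finset.mem_union_right _ hb, hxb⟩

lemma isClosed_freeSpace {W : Set (ℝ × ℝ)} (hW : IsClosed W) : IsClosed (freeSpace W) := by
  have : freeSpace W = ⋂ q : ℝ × ℝ, ⋂ _ : linf q ≤ 1 / 2, (fun p => p + q) ⁻¹' W := by
    ext p; simp [freeSpace]
  rw [this]
  exact isClosed_iInter fun q => isClosed_iInter fun _ =>
    hW.preimage (continuous_id.add continuous_const)

lemma freeSpace_subset (W : Set (ℝ × ℝ)) : freeSpace W ⊆ W := by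
  intro p hp
  simpa using hp 0 (by norm_num [linf])

/-! ### Costs -/

/-- Pairs of planar points. -/
abbrev Conf : Type := (ℝ × ℝ) × (ℝ × ℝ)

/-- The ℓ₁-distance in the plane. -/
def e1 (x y : ℝ × ℝ) : ℝ≥0∞ :=
  edist ((WithLp.equiv 1 (ℝ × ℝ)).symm x) ((WithLp.equiv 1 (ℝ × ℝ)).symm y)

/-- The ℓ₁-distance between configurations. -/
def dd (x y : Conf) : ℝ≥0∞ := e1 x.1 y.1 + e1 x.2 y.2

/-- The cost of a plan restricted to a set of times. -/
def costOn (γ : ℝ → Conf) (s : Set ℝ) : ℝ≥0∞ :=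
  l1VarOn (fun t => (γ t).1) s + l1VarOn (fun t => (γ t).2) s

lemma e1_eq (x y : ℝ × ℝ) : e1 x y = edist x.1 y.1 + edist x.2 y.2 := by
  rw [e1, WithLp.prod_edist_eq_of_L1]
  rfl

lemma continuous_chainSum (n : ℕ) : Continuous fun p : ℕ → Conf =>
    ∑ i ∈ Finset.range n, dd (p i) (p (i + 1)) := by
  simp only [dd, e1_eq]
  apply continuous_finsetSum
  intro i _
  have h1 : Continuous fun p : ℕ → Conf => p i := continuous_apply i
  have h2 : Continuous fun p : ℕ → Conf => p (i + 1) := continuous_apply (i + 1)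
  have g1 : Continuous fun p : ℕ → Conf => edist (p i).1.1 (p (i + 1)).1.1 :=
    h1.fst.fst.edist h2.fst.fst
  have g2 : Continuous fun p : ℕ → Conf => edist (p i).1.2 (p (i + 1)).1.2 :=
    h1.fst.snd.edist h2.fst.snd
  have g3 : Continuous fun p : ℕ → Conf => edist (p i).2.1 (p (i + 1)).2.1 :=
    h1.snd.fst.edist h2.snd.fst
  have g4 : Continuous fun p : ℕ → Conf => edist (p i).2.2 (p (i + 1)).2.2 :=
    h1.snd.snd.edist h2.snd.snd
  exact (g1.add g2).add (g3.add g4)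

lemma dd_le_costOn (γ : ℝ → Conf) {s : Set ℝ} {a b : ℝ} (ha : a ∈ s) (hb : b ∈ s) :
    dd (γ a) (γ b) ≤ costOn γ s :=
  add_le_add (eVariationOn.edist_le _ ha hb) (eVariationOn.edist_le _ ha hb)

lemma l1VarOn_add (γ : ℝ → ℝ × ℝ) {a b c : ℝ} (hab : a ≤ b) (hbc : b ≤ c) :
    l1VarOn γ (Icc a b) + l1VarOn γ (Icc b c) = l1VarOn γ (Icc a c) := by
  have := eVariationOn.Icc_add_Icc
    (fun t => (WithLp.equiv 1 (ℝ × ℝ)).symm (γ t)) (s := univ) hab hbc (mem_univ b)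
  simp only [univ_inter] at this
  exact this

lemma costOn_add (γ : ℝ → Conf) {a b c : ℝ} (hab : a ≤ b) (hbc : b ≤ c) :
    costOn γ (Icc a b) + costOn γ (Icc b c) = costOn γ (Icc a c) := by
  simp only [costOn]
  rw [← l1VarOn_add (fun t => (γ t).1) hab hbc, ← l1VarOn_add (fun t => (γ t).2) hab hbc]
  ring

/-! ### Extraction of chains -/

lemma chain_exists (γ : ℝ → Conf) (n : ℕ) :
    ∀ (𝒞 : Finset (Set Conf)), 𝒞.card = n → (∀ C ∈ 𝒞, IsClosed C) →
      ∀ a b : ℝ, a ≤ b → ContinuousOn γ (Icc a b) →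
      (∀ t ∈ Icc a b, ∃ C ∈ 𝒞, γ t ∈ C) →
      ∃ p : ℕ → Conf, p 0 = γ a ∧ (∀ i, n ≤ i → p i = γ b) ∧
        (∀ i, ∃ C ∈ 𝒞, p i ∈ C ∧ p (i + 1) ∈ C) ∧
        ∑ i ∈ Finset.range n, dd (p i) (p (i + 1)) ≤ costOn γ (Icc a b) := by
  classical
  induction n with
  | zero =>
    intro 𝒞 hc _ a b hab _ hcov
    rw [Finset.card_eq_zero] at hc
    subst hc
    obtain ⟨C, hC, -⟩ := hcov a ⟨le_rfl, hab⟩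
    simp at hC
  | succ n ih =>
    intro 𝒞 hc hcl a b hab hγ hcov
    obtain ⟨C₁, hC₁, haC⟩ := hcov a ⟨le_rfl, hab⟩
    have hcomp : IsCompact (Icc a b ∩ γ ⁻¹' C₁) :=
      isCompact_Icc.of_isClosed_subset
        (hγ.preimage_isClosed_of_isClosed isClosed_Icc (hcl C₁ hC₁)) Set.inter_subset_left
    obtain ⟨T, ⟨hT, hTC⟩, hTmax⟩ := hcomp.exists_isGreatest ⟨a, ⟨le_rfl, hab⟩, haC⟩
    rcases eq_or_lt_of_le hT.2 with hTb | hTb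
    · subst hTb
      refine ⟨fun i => if i = 0 then γ a else γ T, by simp, ?_, ?_, ?_⟩
      · intro i hi
        have : i ≠ 0 := by omega
        simp [this]
      · intro i
        refine ⟨C₁, hC₁, ?_, ?_⟩
        · dsimp only
          split_ifs
          · exact haC
          · exact hTC
        · simpa using hTC
      · rw [Finset.sum_range_succ']
        have : dd (γ T) (γ T) = 0 := by simp [dd, e1]
        simp only [Nat.add_eq_zero_iff, one_ne_zero, and_false, if_false, if_true, this,
          Finset.sum_const_zero, zero_add]
        exact dd_le_costOn γ ⟨le_rfl, hab⟩ ⟨hab, le_rfl⟩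
    · have hU : IsClosed (⋃ C ∈ 𝒞.erase C₁, C) :=
        isClosed_biUnion_finset fun C hC => hcl C (Finset.mem_of_mem_erase hC)
      have hγ' : ContinuousOn γ (Icc T b) := hγ.mono (Icc_subset_Icc_left hT.1)
      have hcl' := hγ'.preimage_isClosed_of_isClosed isClosed_Icc hU
      have hsub : Ioc T b ⊆ Icc T b ∩ γ ⁻¹' (⋃ C ∈ 𝒞.erase C₁, C) := by
        intro t ht
        refine ⟨⟨ht.1.le, ht.2⟩, ?_⟩
        obtain ⟨C, hC, htC⟩ := hcov t ⟨hT.1.trans ht.1.le, ht.2⟩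
        have hne : C ≠ C₁ := by
          rintro rfl
          exact absurd (hTmax ⟨⟨hT.1.trans ht.1.le, ht.2⟩, htC⟩) (not_le.2 ht.1)
        exact Set.mem_biUnion (Finset.mem_erase.2 ⟨hne, hC⟩) htC
      have hsub' := closure_minimal hsub hcl'
      rw [closure_Ioc hTb.ne] at hsub'
      have hcov' : ∀ t ∈ Icc T b, ∃ C ∈ 𝒞.erase C₁, γ t ∈ C := by
        intro t ht
        have := (hsub' ht).2
        simpa only [Set.mem_preimage, Set.mem_iUnion, exists_prop] using this
      obtain ⟨p, hp0, hpn, hpc, hps⟩ := ih (𝒞.erase C₁)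
        (by rw [Finset.card_erase_of_mem hC₁, hc]; rfl)
        (fun C hC => hcl C (Finset.mem_of_mem_erase hC)) T b hTb.le hγ' hcov'
      refine ⟨fun i => Nat.casesOn i (γ a) p, rfl, ?_, ?_, ?_⟩
      · intro i hi
        obtain ⟨j, rfl⟩ : ∃ j, i = j + 1 := ⟨i - 1, by omega⟩
        exact hpn j (by omega)
      · intro i
        cases i with
        | zero => exact ⟨C₁, hC₁, haC, by show p 0 ∈ C₁; rw [hp0]; exact hTC⟩
        | succ j =>
          obtain ⟨C, hC, h⟩ := hpc j
          exact ⟨C, Finset.mem_of_mem_erase hC, h⟩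
      · rw [Finset.sum_range_succ', ← costOn_add γ hT.1 hTb.le, add_comm]
        refine add_le_add ?_ hps
        show dd (γ a) (p 0) ≤ _
        rw [hp0]
        exact dd_le_costOn γ ⟨le_rfl, hT.1⟩ ⟨hT.1, le_rfl⟩

/-! ### Elementary moves -/

/-- An axis-parallel move of one robot inside `S`. -/
def Move (S : Set Conf) (y z : Conf) : Prop :=
  (∀ c ∈ Icc (0 : ℝ) 1, y + c • (z - y) ∈ S) ∧
    ((y.2 = z.2 ∧ (y.1.1 = z.1.1 ∨ y.1.2 = z.1.2)) ∨
      (y.1 = z.1 ∧ (y.2.1 = z.2.1 ∨ y.2.2 = z.2.2)))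

/-- `z` is reachable from `x` by a finite sequence of moves of total length `d`. -/
inductive Rch (S : Set Conf) (x : Conf) : Conf → ℝ≥0∞ → Prop
  | refl : Rch S x x 0
  | step (y z : Conf) (d : ℝ≥0∞) (h : Rch S x y d) (hm : Move S y z) :
      Rch S x z (d + dd y z)

lemma move_of_convex {S C : Set Conf} (hC : Convex ℝ C) (hCS : C ⊆ S) {y z : Conf} (hy : y ∈ C)
    (hz : z ∈ C)
    (h : (y.2 = z.2 ∧ (y.1.1 = z.1.1 ∨ y.1.2 = z.1.2)) ∨
      (y.1 = z.1 ∧ (y.2.1 = z.2.1 ∨ y.2.2 = z.2.2))) : Move S y z :=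
  ⟨fun _ hc => hCS (hC.add_smul_sub_mem hy hz hc), h⟩

/-- The cells: boxes intersected with one separation half-space. -/
def cell (I J I' J' : Set ℝ) (k : Fin 4) : Set Conf :=
  {c | c.1.1 ∈ I ∧ c.1.2 ∈ J ∧ c.2.1 ∈ I' ∧ c.2.2 ∈ J' ∧
    (if k = 0 then 1 ≤ c.1.1 - c.2.1 else if k = 1 then 1 ≤ c.2.1 - c.1.1 else
      if k = 2 then 1 ≤ c.1.2 - c.2.2 else 1 ≤ c.2.2 - c.1.2)}

lemma isClosed_cell {I J I' J' : Set ℝ} (hI : IsClosed I) (hJ : IsClosed J) (hI' : IsClosed I')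
    (hJ' : IsClosed J') (k : Fin 4) : IsClosed (cell I J I' J' k) := by
  refine (hI.preimage (f := fun c : Conf => c.1.1) (by fun_prop)).inter <|
    (hJ.preimage (f := fun c : Conf => c.1.2) (by fun_prop)).inter <|
    (hI'.preimage (f := fun c : Conf => c.2.1) (by fun_prop)).inter <|
    (hJ'.preimage (f := fun c : Conf => c.2.2) (by fun_prop)).inter ?_
  fin_cases k
  · exact isClosed_le (f := fun _ : Conf => (1 : ℝ)) (g := fun c : Conf => c.1.1 - c.2.1)
      (by fun_prop) (by fun_prop)
  · exact isClosed_le (f := fun _ : Conf => (1 : ℝ)) (g := fun c : Conf => c.2.1 - c.1.1)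
      (by fun_prop) (by fun_prop)
  · exact isClosed_le (f := fun _ : Conf => (1 : ℝ)) (g := fun c : Conf => c.1.2 - c.2.2)
      (by fun_prop) (by fun_prop)
  · exact isClosed_le (f := fun _ : Conf => (1 : ℝ)) (g := fun c : Conf => c.2.2 - c.1.2)
      (by fun_prop) (by fun_prop)

lemma convex_cell {I J I' J' : Set ℝ} (hI : Convex ℝ I) (hJ : Convex ℝ J) (hI' : Convex ℝ I')
    (hJ' : Convex ℝ J') (k : Fin 4) : Convex ℝ (cell I J I' J' k) := by
  rintro x ⟨x1, x2, x3, x4, x5⟩ y ⟨y1, y2, y3, y4, y5⟩ a b ha hb hab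
  refine ⟨hI x1 y1 ha hb hab, hJ x2 y2 ha hb hab, hI' x3 y3 ha hb hab, hJ' x4 y4 ha hb hab, ?_⟩
  fin_cases k <;>
    simp at x5 y5 ⊢ <;> nlinarith

/-- Any two points of a cell are connected by an ℓ₁-shortest sequence of moves. -/
lemma rch_cell {S : Set Conf} {I J I' J' : Set ℝ} (hI : Convex ℝ I) (hJ : Convex ℝ J)
    (hI' : Convex ℝ I') (hJ' : Convex ℝ J') (k : Fin 4) (hS : cell I J I' J' k ⊆ S)
    {w x y : Conf} {d : ℝ≥0∞} (hx : x ∈ cell I J I' J' k) (hy : y ∈ cell I J I' J' k)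
    (hw : Rch S w x d) : Rch S w y (d + dd x y) := by
  have hC := convex_cell hI hJ hI' hJ' k
  obtain ⟨⟨a, b⟩, a', b'⟩ := x
  obtain ⟨⟨u, v⟩, u', v'⟩ := y
  have key : ∀ p q r : Conf, p ∈ cell I J I' J' k → q ∈ cell I J I' J' k →
      r ∈ cell I J I' J' k →
      (((a, b), (a', b')).2 = p.2 ∧ (a = p.1.1 ∨ b = p.1.2) ∨
        ((a, b) = p.1 ∧ (a' = p.2.1 ∨ b' = p.2.2))) →
      ((p.2 = q.2 ∧ (p.1.1 = q.1.1 ∨ p.1.2 = q.1.2)) ∨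
        (p.1 = q.1 ∧ (p.2.1 = q.2.1 ∨ p.2.2 = q.2.2))) →
      ((q.2 = r.2 ∧ (q.1.1 = r.1.1 ∨ q.1.2 = r.1.2)) ∨
        (q.1 = r.1 ∧ (q.2.1 = r.2.1 ∨ q.2.2 = r.2.2))) →
      ((r.2 = (u', v') ∧ (r.1.1 = u ∨ r.1.2 = v)) ∨
        (r.1 = (u, v) ∧ (r.2.1 = u' ∨ r.2.2 = v'))) →
      dd ((a, b), (a', b')) p + dd p q + dd q r + dd r ((u, v), (u', v')) =
        dd ((a, b), (a', b')) ((u, v), (u', v')) →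
      Rch S w ((u, v), (u', v')) (d + dd ((a, b), (a', b')) ((u, v), (u', v'))) := by
    intro p q r hp hq hr h1 h2 h3 h4 hd
    have := (((hw.step _ _ _ (move_of_convex hC hS hx hp h1)).step _ _ _
      (move_of_convex hC hS hp hq h2)).step _ _ _
      (move_of_convex hC hS hq hr h3)).step _ _ _ (move_of_convex hC hS hr hy h4)
    rw [← hd]
    convert this using 1
    ring
  obtain ⟨x1, x2, x3, x4, x5⟩ := hx
  obtain ⟨y1, y2, y3, y4, y5⟩ := hy
  simp only at x1 x2 x3 x4 x5 y1 y2 y3 y4 y5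
  fin_cases k <;> simp at x5 y5
  · rcases le_total a u with h | h
    · refine key ((a, v), (a', b')) ((a, v), (a', v')) ((u, v), (a', v')) ?_ ?_ ?_
        (by simp) (by simp) (by simp) (by simp) ?_
      all_goals first
        | (refine ⟨by assumption, by assumption, by assumption, by assumption, ?_⟩
           simp
           linarith)
        | (simp only [dd, e1_eq, edist_self]
           ring)
    · refine key ((a, v), (a', b')) ((a, v), (a', v')) ((a, v), (u', v')) ?_ ?_ ?_
        (by simp) (by simp) (by simp) (by simp) ?_
      all_goals first
        | (refine ⟨by assumption, by assumption, by assumption, by assumption, ?_⟩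
           simp
           linarith)
        | (simp only [dd, e1_eq, edist_self]
           ring)
  · rcases le_total a u with h | h
    · refine key ((a, v), (a', b')) ((a, v), (a', v')) ((a, v), (u', v')) ?_ ?_ ?_
        (by simp) (by simp) (by simp) (by simp) ?_
      all_goals first
        | (refine ⟨by assumption, by assumption, by assumption, by assumption, ?_⟩
           simp
           linarith)
        | (simp only [dd, e1_eq, edist_self]
           ring)
    · refine key ((a, v), (a', b')) ((a, v), (a', v')) ((u, v), (a', v')) ?_ ?_ ?_
        (by simp) (by simp) (by simp) (by simp) ?_
      all_goals first
        | (refine ⟨by assumption, by assumption, by assumption, by assumption, ?_⟩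
           simp
           linarith)
        | (simp only [dd, e1_eq, edist_self]
           ring)
  · rcases le_total b v with h | h
    · refine key ((u, b), (a', b')) ((u, b), (u', b')) ((u, v), (u', b')) ?_ ?_ ?_
        (by simp) (by simp) (by simp) (by simp) ?_
      all_goals first
        | (refine ⟨by assumption, by assumption, by assumption, by assumption, ?_⟩
           simp
           linarith)
        | (simp only [dd, e1_eq, edist_self]
           ring)
    · refine key ((u, b), (a', b')) ((u, b), (u', b')) ((u, b), (u', v')) ?_ ?_ ?_
        (by simp) (by simp) (by simp) (by simp) ?_
      all_goals first
        | (refine ⟨by assumption, by assumption, by assumption, by assumption, ?_⟩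
           simp
           linarith)
        | (simp only [dd, e1_eq, edist_self]
           ring)
  · rcases le_total b v with h | h
    · refine key ((u, b), (a', b')) ((u, b), (u', b')) ((u, b), (u', v')) ?_ ?_ ?_
        (by simp) (by simp) (by simp) (by simp) ?_
      all_goals first
        | (refine ⟨by assumption, by assumption, by assumption, by assumption, ?_⟩
           simp
           linarith)
        | (simp only [dd, e1_eq, edist_self]
           ring)
    · refine key ((u, b), (a', b')) ((u, b), (u', b')) ((u, v), (u', b')) ?_ ?_ ?_
        (by simp) (by simp) (by simp) (by simp) ?_
      all_goals first
        | (refine ⟨by assumption, by assumption, by assumption, by assumption, ?_⟩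
           simp
           linarith)
        | (simp only [dd, e1_eq, edist_self]
           ring)

/-- The free configuration space is a finite union of closed cells. -/
lemma exists_cells {F : Set (ℝ × ℝ)} (hF : RC F) (hFc : IsClosed F) :
    ∃ 𝒞 : Finset (Set Conf), (∀ C ∈ 𝒞, IsClosed C ∧ C ⊆ {c | FreeConf F c} ∧
        ∀ w x y : Conf, ∀ d, x ∈ C → y ∈ C → Rch {c | FreeConf F c} w x d →
          Rch {c | FreeConf F c} w y (d + dd x y)) ∧
      ∀ c, FreeConf F c → ∃ C ∈ 𝒞, c ∈ C := by
  classical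
  obtain ⟨B, hB, hcov⟩ := hF.cover
  rw [hFc.closure_eq] at hB
  refine ⟨(B ×ˢ B ×ˢ (Finset.univ : Finset (Fin 4))).image
    (fun z => cell z.1.1 z.1.2 z.2.1.1 z.2.1.2 z.2.2), ?_, ?_⟩
  · intro C hC
    obtain ⟨⟨b, b', k⟩, hz, rfl⟩ := Finset.mem_image.1 hC
    simp only [Finset.mem_product, Finset.mem_univ, and_true] at hz
    obtain ⟨h1, h2, h3, h4, h5⟩ := hB b hz.1
    obtain ⟨h1', h2', h3', h4', h5'⟩ := hB b' hz.2
    have hsub : cell b.1 b.2 b'.1 b'.2 k ⊆ {c | FreeConf F c} := by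
      rintro c ⟨c1, c2, c3, c4, c5⟩
      refine ⟨h5 ⟨c1, c2⟩, h5' ⟨c3, c4⟩, ?_⟩
      rw [linf, le_max_iff, le_abs, le_abs]
      fin_cases k <;> simp at c5 ⊢ <;> simp [c5]
    exact ⟨isClosed_cell h3 h4 h3' h4' k, hsub, fun w x y d hx hy hw =>
      rch_cell h1 h2 h1' h2' k hsub hx hy hw⟩
  · rintro c ⟨c1, c2, c3⟩
    obtain ⟨b, hb, hcb⟩ := hcov _ c1
    obtain ⟨b', hb', hcb'⟩ := hcov _ c2
    have : ∃ k : Fin 4, c ∈ cell b.1 b.2 b'.1 b'.2 k := by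
      rw [linf, le_max_iff, le_abs, le_abs] at c3
      simp only [Prod.fst_sub, Prod.snd_sub, neg_sub] at c3
      rcases c3 with (h | h) | (h | h)
      · exact ⟨0, hcb.1, hcb.2, hcb'.1, hcb'.2, by simpa using h⟩
      · exact ⟨1, hcb.1, hcb.2, hcb'.1, hcb'.2, by simpa using h⟩
      · exact ⟨2, hcb.1, hcb.2, hcb'.1, hcb'.2, by simpa using h⟩
      · exact ⟨3, hcb.1, hcb.2, hcb'.1, hcb'.2, by simpa using h⟩
    obtain ⟨k, hk⟩ := this
    exact ⟨_, Finset.mem_image.2 ⟨(b, b', k), by simp [hb, hb'], rfl⟩, hk⟩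

/-! ### Plans from sequences of moves -/

lemma Rch.seq {S : Set Conf} {x z : Conf} {d : ℝ≥0∞} (h : Rch S x z d) :
    ∃ (M : ℕ) (q : ℕ → Conf), q 0 = x ∧ q M = z ∧ (∀ i, i < M → Move S (q i) (q (i + 1))) ∧
      ∑ i ∈ Finset.range M, dd (q i) (q (i + 1)) = d := by
  induction h with
  | refl => exact ⟨0, fun _ => x, rfl, rfl, by simp, by simp⟩
  | step y z d _ hm ih =>
    obtain ⟨M, q, h0, hM, hq, hd⟩ := ih
    have hlt : ∀ i, i ≤ M → (fun i => if i ≤ M then q i else z) i = q i := by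
      intro i hi
      simp [hi]
    refine ⟨M + 1, fun i => if i ≤ M then q i else z, ?_, ?_, ?_, ?_⟩
    · rw [hlt 0 (Nat.zero_le _), h0]
    · simp
    · intro i hi
      rcases Nat.lt_succ_iff_lt_or_eq.1 hi with h | h
      · rw [hlt i h.le, hlt (i + 1) h]
        exact hq i h
      · subst h
        rw [hlt i le_rfl, hM]
        simpa using hm
    · rw [Finset.sum_range_succ]
      congr 1
      · rw [← hd]
        refine Finset.sum_congr rfl fun i hi => ?_
        have hi := Finset.mem_range.1 hi
        rw [hlt i hi.le, hlt (i + 1) hi]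
      · rw [hlt M le_rfl, hM]
        simp

/-- Truncation to the unit interval. -/
def clamp (x : ℝ) : ℝ := max 0 (min 1 x)

/-- Piecewise linear interpolation through `q 0, …, q M`. -/
def interp (q : ℕ → Conf) (M : ℕ) (x : ℝ) : Conf :=
  q 0 + ∑ i ∈ Finset.range M, clamp (x - i) • (q (i + 1) - q i)

lemma continuous_interp (q : ℕ → Conf) (M : ℕ) : Continuous (interp q M) := by
  unfold interp clamp
  fun_prop

lemma interp_eq (q : ℕ → Conf) (M j : ℕ) (hj : j + 1 ≤ M) (x : ℝ)
    (hx : x ∈ Icc (j : ℝ) (j + 1)) :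
    interp q M x = q j + (x - j) • (q (j + 1) - q j) := by
  induction M, hj using Nat.le_induction with
  | base =>
    rw [interp, Finset.sum_range_succ]
    have h1 : ∑ i ∈ Finset.range j, clamp (x - i) • (q (i + 1) - q i) = q j - q 0 := by
      rw [← Finset.sum_range_sub]
      refine Finset.sum_congr rfl fun i hi => ?_
      have hi : i + 1 ≤ j := Finset.mem_range.1 hi
      have hi' : (i : ℝ) + 1 ≤ j := by exact_mod_cast hi
      have : clamp (x - i) = 1 := by
        rw [clamp, min_eq_left (by linarith [hx.1])]
        norm_num
      rw [this, one_smul]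
    have h2 : clamp (x - j) = x - j := by
      rw [clamp, min_eq_right (by linarith [hx.2]), max_eq_right (by linarith [hx.1])]
    rw [h1, h2]
    abel
  | succ M hM ih =>
    rw [interp, Finset.sum_range_succ]
    have hM' : (j : ℝ) + 1 ≤ M := by exact_mod_cast hM
    have : clamp (x - M) = 0 := by
      rw [clamp, min_eq_right (by linarith [hx.2]), max_eq_left (by linarith [hx.2])]
    rw [this, zero_smul, add_zero]
    exact ih

lemma l1VarOn_affine (γ : ℝ → ℝ × ℝ) (P Q : ℝ × ℝ) (φ : ℝ → ℝ) (hφ : Monotone φ) (a b : ℝ)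
    (h0 : φ a = 0) (h1 : φ b = 1)
    (h : ∀ t ∈ Icc a b, γ t = P + φ t • (Q - P)) :
    l1VarOn γ (Icc a b) ≤ e1 P Q := by
  set g : ℝ → WithLp 1 (ℝ × ℝ) := fun x => WithLp.toLp 1 P + x • WithLp.toLp 1 (Q - P) with hg
  have hl : LipschitzWith ‖WithLp.toLp 1 (Q - P)‖₊ g := by
    refine LipschitzWith.of_dist_le_mul fun x y => ?_
    rw [hg, dist_add_left, dist_eq_norm, ← sub_smul, norm_smul, Real.dist_eq, mul_comm]
    rfl
  have h2 : l1VarOn γ (Icc a b) = eVariationOn (g ∘ φ) (Icc a b) := by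
    refine eVariationOn.eq_of_eqOn fun t ht => ?_
    simp only [h t ht]
    rfl
  rw [h2]
  have h3 : eVariationOn φ (Icc a b) ≤ 1 := by
    have := (hφ.monotoneOn univ).eVariationOn_eq (mem_univ a) (mem_univ b)
    rw [univ_inter, h0, h1] at this
    rw [this]
    simp
  refine ((hl.lipschitzOnWith (s := univ)).comp_eVariationOn_le (mapsTo_univ _ _)).trans ?_
  refine (mul_le_mul_right h3 _).trans ?_
  rw [mul_one, e1, edist_comm, edist_eq_enorm_sub]
  exact le_rfl

lemma plan_of_rch {F : Set (ℝ × ℝ)} {s t : Conf} {d : ℝ≥0∞} (hs : FreeConf F s)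
    (h : Rch {c | FreeConf F c} s t d) :
    ∃ pln, IsPlan s t pln ∧ Feasible F pln ∧ planCost pln ≤ d ∧
      IsRectilinearPlan pln ∧ IsDecoupled pln := by
  have hseq : ∃ (M : ℕ) (q : ℕ → Conf), 0 < M ∧ q 0 = s ∧ q M = t ∧
      (∀ i, i < M → Move {c | FreeConf F c} (q i) (q (i + 1))) ∧
      ∑ i ∈ Finset.range M, dd (q i) (q (i + 1)) = d := by
    obtain ⟨M, q, h0, hM, hq, hd⟩ := h.seq
    rcases Nat.eq_zero_or_pos M with rfl | hpos
    · refine ⟨1, fun _ => s, one_pos, rfl, h0.symm.trans hM, fun i _ => ?_, ?_⟩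
      · refine ⟨fun c _ => ?_, Or.inl ⟨rfl, Or.inl rfl⟩⟩
        simpa using hs
      · rw [← hd]
        simp [dd, e1]
    · exact ⟨M, q, hpos, h0, hM, hq, hd⟩
  obtain ⟨M, q, hpos, h0, hM, hq, hd⟩ := hseq
  have hMR : (0 : ℝ) < M := by exact_mod_cast hpos
  set τ : ℕ → ℝ := fun i => (i : ℝ) / M with hτ
  have τ0 : τ 0 = 0 := by simp [hτ]
  have τM : τ M = 1 := by simp [hτ, hMR.ne']
  have hmul : ∀ i, (M : ℝ) * τ i = i := by
    intro i
    simp only [hτ]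
    field_simp
  have τs : ∀ i, τ i ≤ τ (i + 1) := by
    intro i
    simp only [hτ]
    push_cast
    gcongr
    linarith
  have hIcc : ∀ i, ∀ a ∈ Icc (τ i) (τ (i + 1)), (M : ℝ) * a ∈ Icc (i : ℝ) (i + 1) := by
    intro i a ha
    have h1 := hmul i
    have h2 := hmul (i + 1)
    push_cast at h2
    constructor
    · rw [← h1]; exact mul_le_mul_of_nonneg_left ha.1 hMR.le
    · rw [← h2]; exact mul_le_mul_of_nonneg_left ha.2 hMR.le
  set pln : ℝ → Conf := fun a => interp q M (M * a) with hpln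
  have hpiece : ∀ i, i < M → ∀ a ∈ Icc (τ i) (τ (i + 1)),
      pln a = q i + (M * a - i) • (q (i + 1) - q i) :=
    fun i hi a ha => interp_eq q M i hi _ (hIcc i a ha)
  have hτl : ∀ i, τ i ∈ Icc (τ i) (τ (i + 1)) := fun i => ⟨le_rfl, τs i⟩
  have hτr : ∀ i, τ (i + 1) ∈ Icc (τ i) (τ (i + 1)) := fun i => ⟨τs i, le_rfl⟩
  have hnode : ∀ i, i < M → pln (τ i) = q i := by
    intro i hi
    rw [hpiece i hi _ (hτl i), hmul]
    simp
  have hdiff : ∀ i, i < M → ∀ a ∈ Icc (τ i) (τ (i + 1)),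
      pln a = pln (τ i) + (a - τ i) • ((M : ℝ) • (q (i + 1) - q i)) := by
    intro i hi a ha
    rw [hnode i hi, hpiece i hi a ha, smul_smul]
    congr 2
    rw [← hmul i]
    ring
  refine ⟨pln, ⟨?_, ?_, ?_⟩, ?_, ?_, ⟨?_, ?_⟩, ?_⟩
  · exact ((continuous_interp q M).comp (continuous_const.mul continuous_id)).continuousOn
  · rw [← h0, ← hnode 0 hpos, τ0]
  · obtain ⟨k, rfl⟩ : ∃ k, M = k + 1 := ⟨M - 1, by omega⟩
    rw [← τM, hpiece k (Nat.lt_succ_self k) _ (hτr k), hmul, ← hM]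
    push_cast
    simp
  · intro a ha
    have hMa : 0 ≤ (M : ℝ) * a := mul_nonneg hMR.le ha.1
    have hMa' : (M : ℝ) * a ≤ M := by nlinarith [ha.2]
    obtain ⟨i, hi, hx⟩ : ∃ i, i < M ∧ (M : ℝ) * a ∈ Icc (i : ℝ) (i + 1) := by
      rcases eq_or_lt_of_le hMa' with he | hl
      · refine ⟨M - 1, by omega, ?_⟩
        rw [he, Nat.cast_sub hpos]
        constructor <;> simp
      · exact ⟨⌊(M : ℝ) * a⌋₊, (Nat.floor_lt hMa).2 hl, Nat.floor_le hMa,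
          (Nat.lt_floor_add_one _).le⟩
    have : pln a = q i + (M * a - i) • (q (i + 1) - q i) := interp_eq q M i hi _ hx
    rw [this]
    exact (hq i hi).1 _ ⟨by linarith [hx.1], by linarith [hx.2]⟩
  · have hind : ∀ k, k ≤ M → costOn pln (Icc 0 (τ k)) ≤
        ∑ i ∈ Finset.range k, dd (q i) (q (i + 1)) := by
      intro k
      induction k with
      | zero =>
        intro _
        rw [τ0, Icc_self]
        simp [costOn, l1VarOn]
      | succ k ih =>
        intro hk
        have hnn : 0 ≤ τ k := by simp only [hτ]; positivity
        rw [← costOn_add pln hnn (τs k), Finset.sum_range_succ]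
        have hmono : Monotone fun a : ℝ => (M : ℝ) * a - k := by
          intro x y hxy
          have := mul_le_mul_of_nonneg_left hxy hMR.le
          simp only
          linarith
        have e0 : (fun a : ℝ => (M : ℝ) * a - k) (τ k) = 0 := by simp [hmul]
        have e1' : (fun a : ℝ => (M : ℝ) * a - k) (τ (k + 1)) = 1 := by
          simp only [hmul]; push_cast; ring
        refine add_le_add (ih (by omega)) (add_le_add ?_ ?_)
        · refine l1VarOn_affine _ _ _ (fun a => (M : ℝ) * a - k) hmono _ _ e0 e1' ?_
          intro a ha
          rw [hpiece k hk a ha]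
          rfl
        · refine l1VarOn_affine _ _ _ (fun a => (M : ℝ) * a - k) hmono _ _ e0 e1' ?_
          intro a ha
          rw [hpiece k hk a ha]
          rfl
    have := hind M le_rfl
    rw [τM, hd] at this
    exact this
  · refine ⟨M, τ, τ0, τM, fun i _ => τs i, fun i hi => ⟨((M : ℝ) • (q (i + 1) - q i)).1, ?_, ?_⟩⟩
    · rcases (hq i hi).2 with ⟨-, h | h⟩ | ⟨h, -⟩ <;> simp [h]
    · intro a ha
      dsimp only
      rw [hdiff i hi a ha]
      rfl
  · refine ⟨M, τ, τ0, τM, fun i _ => τs i, fun i hi => ⟨((M : ℝ) • (q (i + 1) - q i)).2, ?_, ?_⟩⟩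
    · rcases (hq i hi).2 with ⟨h, -⟩ | ⟨-, h | h⟩ <;> simp [h]
    · intro a ha
      dsimp only
      rw [hdiff i hi a ha]
      rfl
  · refine ⟨M, τ, τ0, τM, fun i _ => τs i, fun i hi => ?_⟩
    rcases (hq i hi).2 with ⟨h, -⟩ | ⟨h, -⟩
    · right
      intro a ha
      rw [hdiff i hi a ha]
      simp [h]
    · left
      intro a ha
      rw [hdiff i hi a ha]
      simp [h]

/-- For a rectilinear polygonal environment and a reachable pair of free
configurations, there exists an optimal `(s,t)`-plan that is rectilinear and decoupled. -/
theorem exists_optimal_rectilinear_decoupled_plan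
    (W : Set (ℝ × ℝ)) (hW : IsRectilinearEnv W)
    (F : Set (ℝ × ℝ)) (hF : F = freeSpace W)
    (s t : (ℝ × ℝ) × (ℝ × ℝ))
    (hs : FreeConf F s) (ht : FreeConf F t)
    (hreach : ∃ pln, IsPlan s t pln ∧ Feasible F pln) :
    ∃ pln, IsOptimalPlan F s t pln ∧ IsRectilinearPlan pln ∧ IsDecoupled pln := by
  subst hF
  have hFc : IsClosed (freeSpace W) := isClosed_freeSpace hW.2.1.isClosed
  have hFk : IsCompact (freeSpace W) := hW.2.1.of_isClosed_subset hFc (freeSpace_subset W)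
  have hRC : RC (freeSpace W) := by
    rw [freeSpace_eq]
    exact (rc_env hW).compl.dil.compl
  generalize freeSpace W = F at *
  obtain ⟨𝒞, h𝒞, hcov⟩ := exists_cells hRC hFc
  -- every feasible plan yields a chain of at most the same cost
  have hchain : ∀ pln, IsPlan s t pln → Feasible F pln →
      ∃ p : ℕ → Conf, p 0 = s ∧ p 𝒞.card = t ∧
        (∀ i, ∃ C ∈ 𝒞, p i ∈ C ∧ p (i + 1) ∈ C) ∧
        ∑ i ∈ Finset.range 𝒞.card, dd (p i) (p (i + 1)) ≤ planCost pln := by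
    intro pln hp hf
    obtain ⟨p, h0, h1, h2, h3⟩ := chain_exists pln 𝒞.card 𝒞 rfl (fun C hC => (h𝒞 C hC).1) 0 1
      zero_le_one hp.1 (fun a ha => hcov _ (hf a ha))
    exact ⟨p, h0.trans hp.2.1, (h1 _ le_rfl).trans hp.2.2, h2, h3⟩
  -- the compact set of chains
  let K : Set (ℕ → Conf) := {p | p 0 = s ∧ p 𝒞.card = t ∧
    ∀ i, ∃ C ∈ 𝒞, p i ∈ C ∧ p (i + 1) ∈ C}
  have hKc : IsCompact K := by
    refine (isCompact_univ_pi (s := fun _ : ℕ => F ×ˢ F)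
      (fun _ => hFk.prod hFk)).of_isClosed_subset ?_ ?_
    · have : K = {p | p 0 = s} ∩ ({p | p 𝒞.card = t} ∩
          ⋂ i : ℕ, ⋃ C ∈ 𝒞, ((fun p : ℕ → Conf => p i) ⁻¹' C ∩
            (fun p : ℕ → Conf => p (i + 1)) ⁻¹' C)) := by
        ext p
        simp only [K, Set.mem_ofPred_eq, Set.mem_inter_iff, Set.mem_iInter, Set.mem_iUnion,
          Set.mem_preimage, exists_prop]
      rw [this]
      refine (isClosed_eq (continuous_apply 0) continuous_const).inter
        ((isClosed_eq (continuous_apply _) continuous_const).inter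
          (isClosed_iInter fun i => isClosed_biUnion_finset fun C hC => ?_))
      exact ((h𝒞 C hC).1.preimage (continuous_apply i)).inter
        ((h𝒞 C hC).1.preimage (continuous_apply (i + 1)))
    · intro p hp i _
      obtain ⟨C, hC, hpi, -⟩ := hp.2.2 i
      have := (h𝒞 C hC).2.1 hpi
      exact ⟨this.1, this.2.1⟩
  have hcont : Continuous fun p : ℕ → Conf =>
      ∑ i ∈ Finset.range 𝒞.card, dd (p i) (p (i + 1)) := 
    continuous_chainSum 𝒞.card
  obtain ⟨pln₀, hp₀, hf₀⟩ := hreach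
  obtain ⟨p₀, h₀, h₁, h₂, -⟩ := hchain pln₀ hp₀ hf₀
  obtain ⟨p, hpK, hmin⟩ := hKc.exists_isMinOn ⟨p₀, h₀, h₁, h₂⟩ hcont.continuousOn
  have hr : ∀ n : ℕ, Rch {c | FreeConf F c} s (p n)
      (∑ i ∈ Finset.range n, dd (p i) (p (i + 1))) := by
    intro n
    induction n with
    | zero =>
      rw [hpK.1]
      simpa using Rch.refl
    | succ n ih =>
      rw [Finset.sum_range_succ]
      obtain ⟨C, hC, hx, hy⟩ := hpK.2.2 n
      exact (h𝒞 C hC).2.2 _ _ _ _ hx hy ih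
  have hrt := hr 𝒞.card
  rw [hpK.2.1] at hrt
  obtain ⟨pln, h1, h2, h3, h4, h5⟩ := plan_of_rch hs hrt
  refine ⟨pln, ⟨h1, h2, fun pln' hp' hf' => ?_⟩, h4, h5⟩
  obtain ⟨p', g0, g1, g2, g3⟩ := hchain pln' hp' hf'
  exact h3.trans ((hmin ⟨g0, g1, g2⟩).trans g3)

end
end

section
/- Let W be a rectilinear polygonal environment with free space F and fix points s_A,s_B,t_A,t_B ∈ F. For every edge (u,v) of the configuration graph 𝒢, the straight line segment from u to v in ℝ⁴ is contained in the 4-dimensional free space 𝐅. -/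
open Set
open scoped ENNReal

noncomputable section

theorem straddle (p q b s t : ℝ) (hs : 0 ≤ s) (ht : 0 ≤ t) (hst : s + t = 1)
    (hp : 1 ≤ |b - p|) (hq : 1 ≤ |b - q|) (hx : |b - (s * p + t * q)| < 1) :
    ∃ a c : ℝ, 0 < a ∧ 0 < c ∧ a + c = 1 ∧ a * p + c * q = b := by
  have hs' : s = 1 - t := by linarith
  subst hs'
  rw [abs_lt] at hx
  obtain ⟨h1, h2⟩ := hx
  rcases le_abs.1 hp with hp | hp <;> rcases le_abs.1 hq with hq | hq
  · nlinarith
  · have hd : 0 < q - p := by linarith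
    refine ⟨(q - b) / (q - p), (b - p) / (q - p), div_pos (by linarith) hd,
      div_pos (by linarith) hd, ?_, ?_⟩ <;> field_simp <;> ring
  · have hd : 0 < p - q := by linarith
    refine ⟨(b - q) / (p - q), (p - b) / (p - q), div_pos (by linarith) hd,
      div_pos (by linarith) hd, ?_, ?_⟩ <;> field_simp <;> ring
  · nlinarith

theorem gridEdge_clear (F P : Set (ℝ × ℝ)) (p q b c : ℝ × ℝ) (h : IsGridEdge F P p q)
    (hb : IsGridPoint F P b) (hp : 1 ≤ linf (b - p)) (hq : 1 ≤ linf (b - q))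
    (hc : c ∈ segment ℝ p q) : 1 ≤ linf (b - c) := by
  obtain ⟨gp, gq, hax, hsub, hno⟩ := h
  by_contra hlt
  rw [not_le] at hlt
  obtain ⟨s, t, hs, ht, hst, rfl⟩ := hc
  obtain ⟨p1, p2⟩ := p
  obtain ⟨q1, q2⟩ := q
  obtain ⟨b1, b2⟩ := b
  simp only [linf, Prod.fst_sub, Prod.snd_sub, Prod.fst_add, Prod.snd_add, Prod.smul_fst,
    Prod.smul_snd, smul_eq_mul, max_lt_iff, le_max_iff] at hp hq hlt hax
  obtain ⟨l1, l2⟩ := hlt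
  rcases hax with rfl | rfl
  · have e : s * p1 + t * p1 = p1 := by rw [← add_mul, hst, one_mul]
    rw [e] at l1
    obtain ⟨a, c, ha, hc, hac, hb'⟩ := straddle p2 q2 b2 s t hs ht hst
      (hp.resolve_left (not_le.2 l1)) (hq.resolve_left (not_le.2 l1)) l2
    have e' : a * p1 + c * p1 = p1 := by rw [← add_mul, hac, one_mul]
    have hm : ((p1, b2) : ℝ × ℝ) ∈ openSegment ℝ (p1, p2) (p1, q2) :=
      ⟨a, c, ha, hc, hac, by ext <;> simp [e', hb']⟩
    exact hno _ hm ⟨hsub (openSegment_subset_segment _ _ _ hm), hb.2.1, gp.2.2⟩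
  · have e : s * p2 + t * p2 = p2 := by rw [← add_mul, hst, one_mul]
    rw [e] at l2
    obtain ⟨a, c, ha, hc, hac, hb'⟩ := straddle p1 q1 b1 s t hs ht hst
      (hp.resolve_right (not_le.2 l2)) (hq.resolve_right (not_le.2 l2)) l1
    have e' : a * p2 + c * p2 = p2 := by rw [← add_mul, hac, one_mul]
    have hm : ((b1, p2) : ℝ × ℝ) ∈ openSegment ℝ (p1, p2) (q1, p2) :=
      ⟨a, c, ha, hc, hac, by ext <;> simp [e', hb']⟩
    exact hno _ hm ⟨hsub (openSegment_subset_segment _ _ _ hm), gp.2.1, hb.2.2⟩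

theorem linf_sub_comm (p q : ℝ × ℝ) : linf (p - q) = linf (q - p) := by
  simp [linf, abs_sub_comm]

/-- For every edge `(u,v)` of the configuration graph, the straight
segment from `u` to `v` in `ℝ⁴` lies in the 4-dimensional free space. -/
theorem confEdge_segment_subset_freeSpace
    (W : Set (ℝ × ℝ)) (hW : IsRectilinearEnv W)
    (F : Set (ℝ × ℝ)) (hF : F = freeSpace W)
    (sA sB tA tB : ℝ × ℝ)
    (P : Set (ℝ × ℝ)) (hP : P = {sA, sB, tA, tB})
    (hsA : sA ∈ F) (hsB : sB ∈ F) (htA : tA ∈ F) (htB : tB ∈ F)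
    (u v : (ℝ × ℝ) × (ℝ × ℝ)) (huv : ConfEdge F P u v) :
    ∀ c ∈ segment ℝ u v, FreeConf F c := by
  obtain ⟨⟨gu1, gu2, du⟩, ⟨gv1, gv2, dv⟩, h⟩ := huv
  rintro c ⟨s, t, hs, ht, hst, rfl⟩
  obtain ⟨u1, u2⟩ := u
  obtain ⟨v1, v2⟩ := v
  simp only at gu1 gu2 du gv1 gv2 dv h
  rcases h with ⟨rfl, h⟩ | ⟨rfl, h⟩
  · have e : s • u1 + t • u1 = u1 := by rw [← add_smul, hst, one_smul]
    have hm : s • u2 + t • v2 ∈ segment ℝ u2 v2 := ⟨s, t, hs, ht, hst, rfl⟩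
    have := gridEdge_clear F P u2 v2 u1 _ h gu1 du dv hm
    refine ⟨?_, ?_, ?_⟩
    · simpa [e] using gu1.1
    · exact h.2.2.2.1 hm
    · show 1 ≤ linf ((s • u1 + t • u1) - (s • u2 + t • v2))
      rw [e]; exact this
  · have e : s • u2 + t • u2 = u2 := by rw [← add_smul, hst, one_smul]
    have hm : s • u1 + t • v1 ∈ segment ℝ u1 v1 := ⟨s, t, hs, ht, hst, rfl⟩
    rw [linf_sub_comm] at du dv
    have := gridEdge_clear F P u1 v1 u2 _ h gu2 du dv hm
    refine ⟨?_, ?_, ?_⟩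
    · exact h.2.2.2.1 hm
    · simpa [e] using gu2.1
    · show 1 ≤ linf ((s • u1 + t • v1) - (s • u2 + t • u2))
      rw [e, linf_sub_comm]; exact this

end
end

section
/- Let W ⊆ ℝ² be a closed set and let F be its free space. Then: (i) for every horizontal or vertical line ℓ, every connected component of ℓ \ F has diameter strictly greater than 1 (in particular, every bounded component has length greater than 1); and (ii) for all points p, q ∈ F with p and q differing in only one coordinate (the segment pq is axis-parallel) and with distance at most 1, the closed segment from p to q is contained in F. -/
open Set
open scoped ENNReal

noncomputable section

/-- One-dimensional clamping: a point slightly further than `1/2` from `w` can be moved by at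
most `1/2` to get within `e` of `w`. -/
lemma clamp_aux (x w e : ℝ) (he : 0 < e) (h : |x - w| ≤ 1 / 2 + e) :
    ∃ t : ℝ, |t| ≤ 1 / 2 ∧ |x + t - w| ≤ e := by
  rw [abs_le] at h
  rcases le_total (w - x) (-(1 / 2)) with h1 | h1
  · exact ⟨-(1 / 2), by norm_num [abs_le], by rw [abs_le]; constructor <;> linarith⟩
  rcases le_total (w - x) (1 / 2) with h2 | h2
  · exact ⟨w - x, by rw [abs_le]; constructor <;> linarith, by
      rw [abs_le]; constructor <;> linarith⟩
  · exact ⟨1 / 2, by norm_num [abs_le], by rw [abs_le]; constructor <;> linarith⟩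

/-- If `r` lies between `a` and `b`, `|a - b| ≤ 1`, every point within `1/2` of `r` is within `1/2`
of `a` or of `b`. -/
lemma cover_aux (a b s u v : ℝ) (hab : |a - b| ≤ 1) (hu : 0 ≤ u) (hv : 0 ≤ v)
    (huv : u + v = 1) (hs : |s| ≤ 1 / 2) :
    |u * a + v * b + s - a| ≤ 1 / 2 ∨ |u * a + v * b + s - b| ≤ 1 / 2 := by
  obtain rfl : u = 1 - v := by linarith
  have e1 : (1 - v) * a + v * b + s - a = s - v * (a - b) := by ring
  have e2 : (1 - v) * a + v * b + s - b = s + (1 - v) * (a - b) := by ring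
  rw [e1, e2]
  rw [abs_le] at hab hs
  simp only [abs_le]
  rcases le_total 0 (a - b) with h | h
  · have h1 : 0 ≤ v * (a - b) := mul_nonneg hv h
    have h2 : 0 ≤ (1 - v) * (a - b) := mul_nonneg hu h
    by_cases hc : -(1 / 2) ≤ s - v * (a - b)
    · left; constructor <;> linarith
    · right; constructor <;> nlinarith
  · have h1 : v * (a - b) ≤ 0 := mul_nonpos_of_nonneg_of_nonpos hv h
    have h2 : (1 - v) * (a - b) ≤ 0 := mul_nonpos_of_nonneg_of_nonpos hu h
    by_cases hc : s - v * (a - b) ≤ 1 / 2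
    · left; constructor <;> linarith
    · right; constructor <;> nlinarith

/-- A component containing the continuous image of a long interval is long. -/
lemma diam_aux (S : Set (ℝ × ℝ)) (z : ℝ × ℝ) (f : ℝ → ℝ × ℝ) (hf : Isometry f) (w e t : ℝ)
    (he : 0 < e) (hz : f t = z) (ht : |t - w| ≤ 1 / 2 + e)
    (hS : ∀ x, |x - w| ≤ 1 / 2 + e → f x ∈ S) :
    1 < EMetric.diam (connectedComponentIn S z) := by
  have hsub : f '' Icc (w - (1 / 2 + e)) (w + (1 / 2 + e)) ⊆ connectedComponentIn S z := by
    apply IsPreconnected.subset_connectedComponentIn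
    · exact isPreconnected_Icc.image _ hf.continuous.continuousOn
    · refine ⟨t, ?_, hz⟩
      rw [abs_le] at ht
      constructor <;> linarith
    · rintro _ ⟨x, hx, rfl⟩
      apply hS
      rw [abs_le]
      constructor <;> linarith [hx.1, hx.2]
  have hA : f (w - (1 / 2 + e)) ∈ connectedComponentIn S z :=
    hsub ⟨_, ⟨le_rfl, by linarith⟩, rfl⟩
  have hB : f (w + (1 / 2 + e)) ∈ connectedComponentIn S z :=
    hsub ⟨_, ⟨by linarith, le_rfl⟩, rfl⟩
  refine lt_of_lt_of_le ?_ (Metric.edist_le_ediam_of_mem hB hA)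
  rw [hf.edist_eq, edist_dist, Real.dist_eq, ← ENNReal.ofReal_one]
  apply (ENNReal.ofReal_lt_ofReal_iff_of_nonneg zero_le_one).2
  refine lt_of_lt_of_le ?_ (le_abs_self _)
  linarith

/-- For a closed workspace `W` with free space `F`: (i) every connected
component of `ℓ \ F`, for an axis-parallel line `ℓ`, has diameter strictly greater
than `1`; and (ii) any axis-parallel segment of length at most `1` with both endpoints in
`F` is contained in `F`. -/
theorem freeSpace_line_components_and_segments
    (W : Set (ℝ × ℝ)) (hW : IsClosed W)
    (F : Set (ℝ × ℝ)) (hF : F = freeSpace W) :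
    (∀ L : Set (ℝ × ℝ),
        (∃ c : ℝ, L = {p : ℝ × ℝ | p.2 = c} ∨ L = {p : ℝ × ℝ | p.1 = c}) →
        ∀ z ∈ L \ F, 1 < EMetric.diam (connectedComponentIn (L \ F) z)) ∧
    (∀ p q : ℝ × ℝ, p ∈ F → q ∈ F → (p.1 = q.1 ∨ p.2 = q.2) → l1 (p - q) ≤ 1 →
        segment ℝ p q ⊆ F) := by
  subst hF
  have key : ∀ z : ℝ × ℝ, z ∉ freeSpace W → ∃ q : ℝ × ℝ, |q.1| ≤ 1 / 2 ∧ |q.2| ≤ 1 / 2 ∧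
      ∃ e > 0, ∀ v : ℝ × ℝ, |v.1 - (z.1 + q.1)| ≤ e → |v.2 - (z.2 + q.2)| ≤ e → v ∉ W := by
    intro z hz
    simp only [freeSpace, mem_setOf_eq, not_forall, linf, max_le_iff] at hz
    obtain ⟨q, ⟨hq1, hq2⟩, hq⟩ := hz
    obtain ⟨e, he, hb⟩ := Metric.isOpen_iff.1 hW.isOpen_compl _ hq
    refine ⟨q, hq1, hq2, e / 2, half_pos he, fun v h1 h2 => hb ?_⟩
    rw [Metric.mem_ball, Prod.dist_eq, Real.dist_eq, Real.dist_eq]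
    exact lt_of_le_of_lt (max_le h1 h2) (half_lt_self he)
  constructor
  · rintro L ⟨c, rfl | rfl⟩ z ⟨hzL, hzF⟩
    · obtain ⟨q, hq1, hq2, e, he, hb⟩ := key z hzF
      simp only [mem_setOf_eq] at hzL
      subst hzL
      refine diam_aux _ z (fun x => (x, z.2)) ?_ (z.1 + q.1) e z.1 he rfl ?_ ?_
      · intro x y; simp [Prod.edist_eq]
      · rw [show z.1 - (z.1 + q.1) = -q.1 by ring, abs_neg]; linarith
      · intro x hx
        obtain ⟨t, ht, ht'⟩ := clamp_aux _ _ _ he hx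
        refine ⟨rfl, fun h => hb _ ht' ?_ (h (t, q.2) (max_le ht hq2))⟩
        simp [he.le]
    · obtain ⟨q, hq1, hq2, e, he, hb⟩ := key z hzF
      simp only [mem_setOf_eq] at hzL
      subst hzL
      refine diam_aux _ z (fun x => (z.1, x)) ?_ (z.2 + q.2) e z.2 he rfl ?_ ?_
      · intro x y; simp [Prod.edist_eq]
      · rw [show z.2 - (z.2 + q.2) = -q.2 by ring, abs_neg]; linarith
      · intro x hx
        obtain ⟨t, ht, ht'⟩ := clamp_aux _ _ _ he hx
        refine ⟨rfl, fun h => hb _ ?_ ht' (h (q.1, t) (max_le hq1 ht))⟩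
        simp [he.le]
  · rintro ⟨p1, p2⟩ ⟨q1, q2⟩ hp hq hpq hl _ ⟨u, v, hu, hv, huv, rfl⟩ s hs
    obtain ⟨hs1, hs2⟩ := max_le_iff.1 hs
    simp only [l1, Prod.mk_sub_mk] at hl hpq
    have hl1 : |p1 - q1| ≤ 1 := by linarith [abs_nonneg (p2 - q2)]
    have hl2 : |p2 - q2| ≤ 1 := by linarith [abs_nonneg (p1 - q1)]
    have go : ∀ a b : ℝ, (a, b) ∈ freeSpace W → ∀ m : ℝ × ℝ, |m.1 - a| ≤ 1 / 2 →
        |m.2 - b| ≤ 1 / 2 → m ∈ W := by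
      intro a b hab m h1 h2
      have := hab (m.1 - a, m.2 - b) (max_le h1 h2)
      simpa using this
    rcases hpq with rfl | rfl
    · have h1 : |u * p1 + v * p1 + s.1 - p1| ≤ 1 / 2 := by
        rw [← add_mul, huv]; simpa using hs1
      rcases cover_aux p2 q2 s.2 u v hl2 hu hv huv hs2 with h | h
      · exact go _ _ hp _ h1 h
      · exact go _ _ hq _ h1 h
    · have h1 : |u * p2 + v * p2 + s.2 - p2| ≤ 1 / 2 := by
        rw [← add_mul, huv]; simpa using hs2
      rcases cover_aux p1 q1 s.1 u v hl1 hu hv huv hs1 with h | h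
      · exact go _ _ hp _ h h1
      · exact go _ _ hq _ h h1

end
end

section
/- Let W be a rectilinear polygonal environment with free space F, fix points s_A,s_B,t_A,t_B ∈ F, let R be a corridor, and let γ(R) be the giant component of the influence region I(R). Then for every p ∈ R and every q ∈ γ(R), every shortest path in F from p to q is xy-monotone. -/
open Set
open scoped ENNReal

noncomputable section

/-! ### Helper material -/

/-- Every point outside `F` lies in an open rectangle with sides longer than one that
avoids `F`. -/
def FatCompl (F : Set (ℝ × ℝ)) : Prop :=
  ∀ z : ℝ × ℝ, z ∉ F → ∃ a b c d : ℝ, a + 1 < b ∧ c + 1 < d ∧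
    a < z.1 ∧ z.1 < b ∧ c < z.2 ∧ z.2 < d ∧
    ∀ v : ℝ × ℝ, a < v.1 → v.1 < b → c < v.2 → v.2 < d → v ∉ F

/-- A unit speed path in `F` of length the ℓ₁ distance of its end points. -/
def Reach (F : Set (ℝ × ℝ)) (q p : ℝ × ℝ) : Prop :=
  ∃ h : ℝ → ℝ × ℝ, (∀ s t, l1 (h s - h t) ≤ |s - t|) ∧ h 0 = q ∧ h (l1 (p - q)) = p ∧
    ∀ t, 0 ≤ t → t ≤ l1 (p - q) → h t ∈ F

lemma clamp_exists (m e : ℝ) (he : 0 < e) (y : ℝ) (hy : |y - m| < 1 / 2 + e) :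
    ∃ k : ℝ, |k| ≤ 1 / 2 ∧ |y + k - m| < e := by
  rw [abs_lt] at hy
  refine ⟨max (-(1/2)) (min (1/2) (m - y)), ?_, ?_⟩
  · rw [abs_le]
    exact ⟨le_max_left _ _, max_le (by norm_num) (min_le_left _ _)⟩
  · rw [abs_lt]
    rcases le_total (1/2) (m - y) with h | h
    · rw [min_eq_left h, max_eq_right (by norm_num)]
      constructor <;> linarith [hy.1, hy.2]
    · rw [min_eq_right h]
      rcases le_total (-(1/2)) (m - y) with h' | h'
      · rw [max_eq_right h']
        constructor <;> linarith
      · rw [max_eq_left h']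
        constructor <;> linarith [hy.1, hy.2]

lemma fatCompl_freeSpace (W : Set (ℝ × ℝ)) (hW : IsClosed W) : FatCompl (freeSpace W) := by
  intro z hz
  simp only [freeSpace, mem_setOf_eq, not_forall] at hz
  obtain ⟨k, hk, hzk⟩ := hz
  obtain ⟨e, he, hball⟩ := Metric.isOpen_iff.1 hW.isOpen_compl _ hzk
  have hk1 : |k.1| ≤ 1 / 2 := (le_max_left _ _).trans hk
  have hk2 : |k.2| ≤ 1 / 2 := (le_max_right _ _).trans hk
  rw [abs_le] at hk1 hk2
  refine ⟨z.1 + k.1 - (1/2 + e), z.1 + k.1 + (1/2 + e), z.2 + k.2 - (1/2 + e),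
    z.2 + k.2 + (1/2 + e), by linarith, by linarith, by linarith, by linarith, by linarith,
    by linarith, ?_⟩
  intro v h1 h2 h3 h4 hv
  obtain ⟨k1, hk1, hd1⟩ := clamp_exists (z.1 + k.1) e he v.1
    (by rw [abs_lt]; constructor <;> linarith)
  obtain ⟨k2, hk2, hd2⟩ := clamp_exists (z.2 + k.2) e he v.2
    (by rw [abs_lt]; constructor <;> linarith)
  have := hv (k1, k2) (max_le hk1 hk2)
  refine hball ?_ this
  rw [Metric.mem_ball, Prod.dist_eq]
  exact max_lt hd1 hd2

/-- The core construction. -/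
lemma core (F C : Set (ℝ × ℝ)) (hF : FatCompl F) (hC : IsPreconnected C) (hCF : C ⊆ F)
    (q K p : ℝ × ℝ) (hq : q ∈ C) (hK : K ∈ C)
    (hqK1 : q.1 ≤ K.1) (hqK2 : q.2 ≤ K.2) (hKp1 : K.1 ≤ p.1) (hKp2 : K.2 ≤ p.2)
    (hbox : ∀ z : ℝ × ℝ, K.1 ≤ z.1 → z.1 ≤ p.1 → K.2 ≤ z.2 → z.2 ≤ p.2 → z ∈ F)
    (h1 : q.1 < K.1 → ∀ c ∈ C, K.1 - 1 ≤ c.1)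
    (h2 : q.2 < K.2 → ∀ c ∈ C, K.2 - 1 ≤ c.2) : Reach F q p := by
  have hqF := hCF hq
  have hKF := hCF hK
  -- obstacles meeting both corners of the box are disjoint inside the box
  have sep : ∀ a b c d a' b' c' d' : ℝ, ∀ z : ℝ × ℝ, a + 1 < b → c' + 1 < d' →
      q.1 ≤ z.1 → q.2 ≤ z.2 → z.1 ≤ K.1 → z.2 ≤ K.2 →
      (∀ v : ℝ × ℝ, a < v.1 → v.1 < b → c < v.2 → v.2 < d → v ∉ F) →
      (∀ v : ℝ × ℝ, a' < v.1 → v.1 < b' → c' < v.2 → v.2 < d' → v ∉ F) →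
      a < z.1 → z.1 < b → c < z.2 → z.2 < d → a' < z.1 → z.1 < b' → c' < z.2 → z.2 < d' →
      a < q.1 → K.2 < d → K.1 < b' → c' < q.2 → False := by
    intro a b c d a' b' c' d' z hab hcd' hz1 hz2 hz3 hz4 hav hav' e1 e2 e3 e4 e1' e2' e3' e4'
      f1 f2 f3 f4
    have hbK : b ≤ K.1 := by
      by_contra hh
      push Not at hh
      exact hav K (by linarith) hh (by linarith) f2 hKF
    have hdK : d' ≤ K.2 := by
      by_contra hh
      push Not at hh
      exact hav' K (by linarith) f3 (by linarith) hh hKF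
    have g1 := h1 (by linarith)
    have g2 := h2 (by linarith)
    have key := hC {v | v.1 < z.1 ∧ v.2 < z.2} {v | z.1 < v.1 ∨ z.2 < v.2}
      ((isOpen_lt continuous_fst continuous_const).inter
        (isOpen_lt continuous_snd continuous_const))
      ((isOpen_lt continuous_const continuous_fst).union
        (isOpen_lt continuous_const continuous_snd))
    have cov : ∀ v ∈ C, v.1 ≤ z.1 → v.2 ≤ z.2 → v.1 < z.1 ∧ v.2 < z.2 := by
      intro v hv i1 i2
      have j1 := g1 v hv
      have j2 := g2 v hv
      constructor
      · by_contra hh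
        push Not at hh
        exact hav' v (by linarith) (by linarith) (by linarith) (by linarith) (hCF hv)
      · by_contra hh
        push Not at hh
        exact hav v (by linarith) (by linarith) (by linarith) (by linarith) (hCF hv)
    obtain ⟨v, -, hv1, hv2⟩ := key
      (by
        intro v hv
        by_cases i1 : v.1 ≤ z.1
        · by_cases i2 : v.2 ≤ z.2
          · exact Or.inl (cov v hv i1 i2)
          · exact Or.inr (Or.inr (not_le.1 i2))
        · exact Or.inr (Or.inl (not_le.1 i1)))
      ⟨q, hq, cov q hq hz1 hz2⟩ ⟨K, hK, Or.inl (by linarith)⟩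
    simp only [mem_setOf_eq] at hv1 hv2
    rcases hv2 with h | h <;> linarith [hv1.1, hv1.2]
  -- the lower right obstacle set
  let BR : Set (ℝ × ℝ) := {d | q.1 ≤ d.1 ∧ q.2 ≤ d.2 ∧ d.1 ≤ K.1 ∧ d.2 ≤ K.2 ∧
    ∃ a' b' c' d' : ℝ, c' + 1 < d' ∧
      (∀ v : ℝ × ℝ, a' < v.1 → v.1 < b' → c' < v.2 → v.2 < d' → v ∉ F) ∧
      a' < d.1 ∧ d.1 < b' ∧ c' < d.2 ∧ d.2 < d' ∧ K.1 < b' ∧ c' < q.2}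
  let D : Set (ℝ × ℝ) := insert q (insert K (insert p BR))
  have qD : q ∈ D := Or.inl rfl
  have KD : K ∈ D := Or.inr (Or.inl rfl)
  have pD : p ∈ D := Or.inr (Or.inr (Or.inl rfl))
  have hDbox : ∀ d ∈ D, q.1 ≤ d.1 ∧ q.2 ≤ d.2 ∧ d.1 ≤ p.1 ∧ d.2 ≤ p.2 ∧
      (d.2 ≤ K.2 ∨ K.1 ≤ d.1) := by
    rintro d (rfl | rfl | rfl | hd)
    · exact ⟨le_rfl, le_rfl, by linarith, by linarith, Or.inl hqK2⟩
    · exact ⟨by linarith, by linarith, by linarith, by linarith, Or.inl le_rfl⟩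
    · exact ⟨by linarith, by linarith, by linarith, by linarith, Or.inr hKp1⟩
    · obtain ⟨i1, i2, i3, i4, -⟩ := hd
      exact ⟨by linarith, by linarith, by linarith, by linarith, Or.inl i4⟩
  haveI : Nonempty D := ⟨⟨q, qD⟩⟩
  let u : ℝ → ℝ := fun s => ⨅ d : D, (|s - (d.1.1 + d.1.2)| + (d.1.1 - d.1.2))
  have bdd : ∀ s, BddBelow (range fun d : D => (|s - (d.1.1 + d.1.2)| + (d.1.1 - d.1.2))) := by
    intro s
    refine ⟨q.1 - p.2, ?_⟩
    rintro _ ⟨d, rfl⟩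
    have := hDbox d.1 d.2
    have := abs_nonneg (s - (d.1.1 + d.1.2))
    simp only
    linarith
  have u_le : ∀ s, ∀ d ∈ D, u s ≤ |s - (d.1 + d.2)| + (d.1 - d.2) := fun s d hd =>
    ciInf_le (bdd s) ⟨d, hd⟩
  have le_u : ∀ s m, (∀ d ∈ D, m ≤ |s - (d.1 + d.2)| + (d.1 - d.2)) → m ≤ u s := fun s m h =>
    le_ciInf fun d => h d.1 d.2
  have u_lt : ∀ s m, u s < m → ∃ d ∈ D, |s - (d.1 + d.2)| + (d.1 - d.2) < m := by
    intro s m h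
    by_contra hh
    push Not at hh
    exact absurd (le_u s m hh) (not_le.2 h)
  have lip1 : ∀ s t, u s ≤ u t + |s - t| := by
    intro s t
    have : u s - |s - t| ≤ u t := by
      apply le_u
      intro d hd
      have i1 := u_le s d hd
      have i2 := abs_sub_le s t (d.1 + d.2)
      linarith
    linarith
  have uq : u (q.1 + q.2) = q.1 - q.2 := by
    apply le_antisymm
    · have := u_le (q.1 + q.2) q qD
      simpa using this
    · apply le_u
      intro d hd
      have i := hDbox d hd
      have := neg_abs_le (q.1 + q.2 - (d.1 + d.2))
      linarith [i.1]
  have uK : u (K.1 + K.2) = K.1 - K.2 := by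
    apply le_antisymm
    · have := u_le (K.1 + K.2) K KD
      simpa using this
    · apply le_u
      intro d hd
      have i := hDbox d hd
      have j1 := neg_abs_le (K.1 + K.2 - (d.1 + d.2))
      have j2 := le_abs_self (K.1 + K.2 - (d.1 + d.2))
      rcases i.2.2.2.2 with i | i <;> linarith
  have up : u (p.1 + p.2) = p.1 - p.2 := by
    apply le_antisymm
    · have := u_le (p.1 + p.2) p pD
      simpa using this
    · apply le_u
      intro d hd
      have i := hDbox d hd
      have := le_abs_self (p.1 + p.2 - (d.1 + d.2))
      linarith [i.2.2.2.1]
  have hl1 : l1 (p - q) = p.1 + p.2 - (q.1 + q.2) := by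
    simp only [l1, Prod.fst_sub, Prod.snd_sub]
    rw [abs_of_nonneg (by linarith), abs_of_nonneg (by linarith)]
    ring
  refine ⟨fun t => (((t + (q.1 + q.2)) + u (t + (q.1 + q.2))) / 2,
    ((t + (q.1 + q.2)) - u (t + (q.1 + q.2))) / 2), ?_, ?_, ?_, ?_⟩
  · intro s t
    have i1 := lip1 (s + (q.1 + q.2)) (t + (q.1 + q.2))
    have i2 := lip1 (t + (q.1 + q.2)) (s + (q.1 + q.2))
    rw [add_sub_add_right_eq_sub] at i1 i2
    rw [abs_sub_comm t s] at i2
    simp only [l1, Prod.fst_sub, Prod.snd_sub]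
    generalize u (s + (q.1 + q.2)) = A at *
    generalize u (t + (q.1 + q.2)) = B at *
    rcases abs_cases (s - t) with ⟨h, _⟩ | ⟨h, _⟩ <;> rw [h] at i1 i2 ⊢ <;>
    rcases abs_cases ((s + (q.1 + q.2) + A) / 2 - (t + (q.1 + q.2) + B) / 2) with ⟨h', _⟩ | ⟨h', _⟩
      <;> rw [h'] <;>
    rcases abs_cases ((s + (q.1 + q.2) - A) / 2 - (t + (q.1 + q.2) - B) / 2) with ⟨h', _⟩ | ⟨h', _⟩
      <;> rw [h'] <;> linarith
  · simp only [zero_add, uq]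
    ext <;> simp
  · rw [hl1]
    simp only [sub_add_cancel, up]
    ext <;> simp
  · intro t ht0 ht1
    rw [hl1] at ht1
    obtain ⟨s, hs⟩ : ∃ s, s = t + (q.1 + q.2) := ⟨_, rfl⟩
    beta_reduce
    rw [← hs]
    have hs0 : q.1 + q.2 ≤ s := by linarith
    have hs1 : s ≤ p.1 + p.2 := by linarith
    have tri : ∀ a b, a ≤ b → a + u a ≤ b + u b ∧ a - u a ≤ b - u b := by
      intro a b hab
      have i1 := lip1 a b
      have i2 := lip1 b a
      rw [abs_of_nonpos (by linarith)] at i1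
      rw [abs_of_nonneg (by linarith)] at i2
      constructor <;> linarith
    obtain ⟨z, hz⟩ : ∃ z : ℝ × ℝ, z = ((s + u s) / 2, (s - u s) / 2) := ⟨_, rfl⟩
    have hz1 : z.1 = (s + u s) / 2 := by rw [hz]
    have hz2 : z.2 = (s - u s) / 2 := by rw [hz]
    rw [← hz]
    rcases le_total (K.1 + K.2) s with hsK | hsK
    · have i1 := tri _ _ hsK
      have i2 := tri _ _ hs1
      rw [uK] at i1
      rw [up] at i2
      apply hbox <;> linarith [i1.1, i1.2, i2.1, i2.2]
    · have i1 := tri _ _ hs0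
      have i2 := tri _ _ hsK
      rw [uq] at i1
      rw [uK] at i2
      have k1 : q.1 ≤ z.1 := by linarith [i1.1]
      have k2 : q.2 ≤ z.2 := by linarith [i1.2]
      have k3 : z.1 ≤ K.1 := by linarith [i2.1]
      have k4 : z.2 ≤ K.2 := by linarith [i2.2]
      by_contra hzF
      obtain ⟨a, b, c, d, hab, hcd, e1, e2, e3, e4, hav⟩ := hF z hzF
      have w1 : K.1 ≤ q.1 + 1 := by
        rcases hqK1.eq_or_lt with h | h
        · linarith
        · linarith [h1 h q hq]
      have w2 : K.2 ≤ q.2 + 1 := by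
        rcases hqK2.eq_or_lt with h | h
        · linarith
        · linarith [h2 h q hq]
      have nq : ¬ (a < q.1 ∧ c < q.2) := fun h =>
        hav q h.1 (by linarith) h.2 (by linarith) hqF
      have nK : ¬ (K.1 < b ∧ K.2 < d) := fun h =>
        hav K (by linarith) h.1 (by linarith) h.2 hKF
      have nz : z.1 + z.2 = s ∧ z.1 - z.2 = u s := by constructor <;> linarith
      by_cases ha : a < q.1
      · -- upper left obstacle
        have hc : q.2 ≤ c := by
          by_contra hh
          exact nq ⟨ha, not_le.1 hh⟩
        have hd : K.2 < d := by linarith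
        have hb : b ≤ K.1 := by
          by_contra hh
          exact nK ⟨not_le.1 hh, hd⟩
        obtain ⟨e, he, heb, hec⟩ : ∃ e, 0 < e ∧ z.1 + e < b ∧ c < z.2 - e := by
          refine ⟨min (b - z.1) (z.2 - c) / 2, ?_, ?_, ?_⟩
          · have : 0 < min (b - z.1) (z.2 - c) := lt_min (by linarith) (by linarith)
            linarith
          · have : min (b - z.1) (z.2 - c) ≤ b - z.1 := min_le_left _ _
            linarith
          · have : min (b - z.1) (z.2 - c) ≤ z.2 - c := min_le_right _ _
            linarith
        obtain ⟨v, hvD, hv⟩ := u_lt s (u s + 2 * e) (by linarith)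
        have j1 := neg_abs_le (s - (v.1 + v.2))
        have j2 := le_abs_self (s - (v.1 + v.2))
        have jb := hDbox v hvD
        have v1 : v.1 < b := by linarith [nz.1, nz.2]
        have v2 : c < v.2 := by linarith [nz.1, nz.2]
        rcases hvD with rfl | rfl | rfl | hvB
        · linarith
        · linarith
        · linarith
        · obtain ⟨l1, l2, l3, l4, a', b', c', d', m1, m2, m3, m4, m5, m6, m7, m8⟩ := hvB
          exact sep a b c d a' b' c' d' v hab m1 l1 l2 l3 l4 hav m2 (by linarith) v1 v2
            (by linarith) m3 m4 m5 m6 ha hd m7 m8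
      · push Not at ha
        have hb : K.1 < b := by linarith
        have hd : d ≤ K.2 := by
          by_contra hh
          exact nK ⟨hb, not_le.1 hh⟩
        have hc : c < q.2 := by linarith
        obtain ⟨e, he, heb, hec⟩ : ∃ e, 0 < e ∧ a < z.1 - e ∧ z.2 + e < d := by
          refine ⟨min (z.1 - a) (d - z.2) / 2, ?_, ?_, ?_⟩
          · have : 0 < min (z.1 - a) (d - z.2) := lt_min (by linarith) (by linarith)
            linarith
          · have : min (z.1 - a) (d - z.2) ≤ z.1 - a := min_le_left _ _
            linarith
          · have : min (z.1 - a) (d - z.2) ≤ d - z.2 := min_le_right _ _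
            linarith
        have hvB : (z.1 - e, z.2 + e) ∈ D := by
          refine Or.inr (Or.inr (Or.inr ⟨?_, ?_, ?_, ?_, a, b, c, d, hcd, hav,
            ?_, ?_, ?_, ?_, hb, hc⟩)) <;> simp only <;> linarith
        have := u_le s _ hvB
        simp only at this
        rw [show s - (z.1 - e + (z.2 + e)) = 0 by linarith [nz.1], abs_zero] at this
        linarith [nz.2]

/-- One-dimensional orientation data. -/
lemma orient (lo hi q p : ℝ) (hp : lo ≤ p ∧ p ≤ hi) : ∃ ε k : ℝ, (ε = 1 ∨ ε = -1) ∧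
    lo ≤ k ∧ k ≤ hi ∧
    ε * q ≤ ε * k ∧ ε * k ≤ ε * p ∧ (∀ z, ε * k ≤ ε * z → ε * z ≤ ε * p → lo ≤ z ∧ z ≤ hi) ∧
    (ε * q < ε * k → ∀ c, lo - 1 ≤ c → c ≤ hi + 1 → ε * k - 1 ≤ ε * c) := by
  obtain ⟨p1, p2⟩ := hp
  rcases le_total q p with h | h
  · refine ⟨1, max lo q, Or.inl rfl, le_max_left _ _, max_le (by linarith) (by linarith), ?_⟩
    simp only [one_mul]
    refine ⟨le_max_right _ _, max_le p1 h, ?_, ?_⟩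
    · intro z h1 h2
      exact ⟨(le_max_left _ _).trans h1, by linarith⟩
    · intro h1 c h2 h3
      rcases max_choice lo q with h4 | h4 <;> rw [h4] at h1 ⊢ <;> linarith
  · refine ⟨-1, min hi q, Or.inr rfl, le_min (by linarith) (by linarith), min_le_left _ _, ?_⟩
    simp only [neg_one_mul, neg_le_neg_iff, neg_lt_neg_iff]
    refine ⟨min_le_right _ _, le_min p2 h, ?_, ?_⟩
    · intro z h1 h2
      exact ⟨by linarith, h1.trans (min_le_left _ _)⟩
    · intro h1 c h2 h3
      rcases min_choice hi q with h4 | h4 <;> rw [h4] at h1 ⊢ <;> linarith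

lemma corridor_sign_mul (ε : ℝ) (hε : ε = 1 ∨ ε = -1) (x : ℝ) : ε * (ε * x) = x := by
  rcases hε with rfl | rfl <;> ring

lemma fat_interval (ε : ℝ) (hε : ε = 1 ∨ ε = -1) (a b x : ℝ) (hab : a + 1 < b)
    (h1 : a < ε * x) (h2 : ε * x < b) : ∃ a' b' : ℝ, a' + 1 < b' ∧ a' < x ∧ x < b' ∧
      ∀ v, a' < v → v < b' → a < ε * v ∧ ε * v < b := by
  rcases hε with rfl | rfl
  · exact ⟨a, b, hab, by linarith, by linarith,
      fun v h1 h2 => ⟨by linarith, by linarith⟩⟩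
  · exact ⟨-b, -a, by linarith, by linarith, by linarith,
      fun v h1 h2 => ⟨by linarith, by linarith⟩⟩

lemma reach_of_rect (F C : Set (ℝ × ℝ)) (hF : FatCompl F) (hC : IsPreconnected C) (hCF : C ⊆ F)
    (xlo xhi ylo yhi : ℝ) (hRC : Icc xlo xhi ×ˢ Icc ylo yhi ⊆ C)
    (hCB : C ⊆ Icc (xlo - 1) (xhi + 1) ×ˢ Icc (ylo - 1) (yhi + 1))
    (p q : ℝ × ℝ) (hp : p ∈ Icc xlo xhi ×ˢ Icc ylo yhi) (hq : q ∈ C) : Reach F q p := by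
  obtain ⟨ε, k, hε, hk1, hk2, hqk, hkp, hεb, hεc⟩ := orient xlo xhi q.1 p.1 hp.1
  obtain ⟨δ, j, hδ, hj1, hj2, hqj, hjp, hδb, hδc⟩ := orient ylo yhi q.2 p.2 hp.2
  let σ : ℝ × ℝ → ℝ × ℝ := fun z => (ε * z.1, δ * z.2)
  have hσσ : ∀ z, σ (σ z) = z := fun z => by
    ext
    · exact corridor_sign_mul ε hε z.1
    · exact corridor_sign_mul δ hδ z.2
  have hσc : Continuous σ := by fun_prop
  have hl1 : ∀ z w, l1 (σ z - σ w) = l1 (z - w) := by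
    intro z w
    simp only [l1, σ, Prod.fst_sub, Prod.snd_sub, ← mul_sub, abs_mul]
    have h1 : |ε| = 1 := by rcases hε with rfl | rfl <;> simp
    have h2 : |δ| = 1 := by rcases hδ with rfl | rfl <;> simp
    rw [h1, h2, one_mul, one_mul]
  have key : Reach (σ ⁻¹' F) (σ q) (σ p) := by
    refine core (σ ⁻¹' F) (σ '' C) ?_ (hC.image σ hσc.continuousOn) ?_ (σ q) (σ (k, j)) (σ p)
      (mem_image_of_mem _ hq) (mem_image_of_mem _ (hRC ⟨⟨hk1, hk2⟩, ⟨hj1, hj2⟩⟩))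
      hqk hqj hkp hjp ?_ ?_ ?_
    · intro z hz
      obtain ⟨a, b, c, d, hab, hcd, e1, e2, e3, e4, hav⟩ := hF (σ z) hz
      obtain ⟨a', b', hab', f1, f2, f3⟩ := fat_interval ε hε a b z.1 hab e1 e2
      obtain ⟨c', d', hcd', g1, g2, g3⟩ := fat_interval δ hδ c d z.2 hcd e3 e4
      refine ⟨a', b', c', d', hab', hcd', f1, f2, g1, g2, ?_⟩
      intro v v1 v2 v3 v4
      exact hav (σ v) (f3 _ v1 v2).1 (f3 _ v1 v2).2 (g3 _ v3 v4).1 (g3 _ v3 v4).2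
    · rintro _ ⟨z, hz, rfl⟩
      rw [mem_preimage, hσσ]
      exact hCF hz
    · intro z z1 z2 z3 z4
      have i1 := hεb (ε * z.1)
      have i2 := hδb (δ * z.2)
      rw [corridor_sign_mul ε hε] at i1
      rw [corridor_sign_mul δ hδ] at i2
      exact hCF (hRC ⟨i1 z1 z2, i2 z3 z4⟩)
    · rintro h _ ⟨z, hz, rfl⟩
      exact hεc h z.1 (hCB hz).1.1 (hCB hz).1.2
    · rintro h _ ⟨z, hz, rfl⟩
      exact hδc h z.2 (hCB hz).2.1 (hCB hz).2.2
  obtain ⟨h, lip, h0, hL, hm⟩ := key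
  rw [hl1] at hL hm
  refine ⟨fun t => σ (h t), ?_, ?_, ?_, hm⟩
  · intro s t
    rw [hl1]
    exact lip s t
  · simp only [h0, hσσ]
  · simp only [hL, hσσ]

lemma edist_toLp (z w : ℝ × ℝ) : edist ((WithLp.equiv 1 (ℝ × ℝ)).symm z)
    ((WithLp.equiv 1 (ℝ × ℝ)).symm w) = ENNReal.ofReal (l1 (z - w)) := by
  rw [WithLp.prod_edist_eq_of_L1]
  simp only [l1, Prod.fst_sub, Prod.snd_sub]
  rw [ENNReal.ofReal_add (abs_nonneg _) (abs_nonneg _), edist_dist, edist_dist]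
  rfl

lemma l1_nonneg (z : ℝ × ℝ) : 0 ≤ l1 z := add_nonneg (abs_nonneg _) (abs_nonneg _)

lemma exists_short_path (F : Set (ℝ × ℝ)) (p q : ℝ × ℝ) (h : Reach F q p) :
    ∃ g, IsPathIn F p q g ∧ pathLen g ≤ ENNReal.ofReal (l1 (p - q)) := by
  obtain ⟨f, lip, h0, hL, hm⟩ := h
  obtain ⟨L, hLdef⟩ : ∃ L, L = l1 (p - q) := ⟨_, rfl⟩
  rw [← hLdef] at hL hm ⊢
  have hL0 : 0 ≤ L := hLdef ▸ l1_nonneg _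
  have lip' : LipschitzWith (Real.toNNReal L)
      (fun t => (WithLp.equiv 1 (ℝ × ℝ)).symm (f (L * (1 - t)))) := by
    intro s t
    rw [edist_toLp, edist_dist, Real.dist_eq]
    change _ ≤ ENNReal.ofReal L * _
    rw [← ENNReal.ofReal_mul hL0]
    apply ENNReal.ofReal_le_ofReal
    refine (lip _ _).trans (le_of_eq ?_)
    rw [show L * (1 - s) - L * (1 - t) = L * (t - s) by ring, abs_mul, abs_of_nonneg hL0,
      abs_sub_comm]
  refine ⟨fun t => f (L * (1 - t)), ⟨?_, ?_, ?_, ?_⟩, ?_⟩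
  · have hf : Continuous f := by
      have : LipschitzWith 1 f := by
        apply LipschitzWith.of_dist_le_mul
        intro s t
        rw [NNReal.coe_one, one_mul, Prod.dist_eq, Real.dist_eq s t]
        have := lip s t
        simp only [l1, Prod.fst_sub, Prod.snd_sub] at this
        refine max_le ?_ ?_ <;> rw [Real.dist_eq]
        · linarith [abs_nonneg ((f s).2 - (f t).2)]
        · linarith [abs_nonneg ((f s).1 - (f t).1)]
      exact this.continuous
    exact (hf.comp (by fun_prop)).continuousOn
  · simpa using hL
  · simpa using h0
  · intro t ht
    apply hm
    · exact mul_nonneg hL0 (by linarith [ht.2])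
    · nlinarith [ht.1]
  · have := (lip'.lipschitzOnWith (s := univ)).comp_eVariationOn_le (g := id) (s := Icc 0 1)
      (mapsTo_univ _ _)
    refine this.trans ?_
    have h2 := (monotoneOn_id (s := Icc (0:ℝ) 1)).eVariationOn_le
      (a := 0) (b := 1) (by simp) (by simp)
    rw [inter_self] at h2
    simp only [id, sub_zero, ENNReal.ofReal_one] at h2
    calc _ ≤ (Real.toNNReal L : ℝ≥0∞) * 1 := by gcongr
      _ = _ := by rw [mul_one]; rfl

lemma xy_of_short (g : ℝ → ℝ × ℝ) (h : pathLen g ≤ ENNReal.ofReal (l1 (g 0 - g 1))) :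
    XYMonotone g := by
  have key : ∀ s t, 0 ≤ s → s ≤ t → t ≤ 1 →
      l1 (g 0 - g s) + l1 (g s - g t) + l1 (g t - g 1) ≤ l1 (g 0 - g 1) := by
    intro s t hs hst ht
    let f : ℝ → WithLp 1 (ℝ × ℝ) := fun t => (WithLp.equiv 1 (ℝ × ℝ)).symm (g t)
    have e1 : eVariationOn f (Icc 0 1) =
        eVariationOn f (Icc 0 s) + eVariationOn f (Icc s t) + eVariationOn f (Icc t 1) := by
      have a1 := eVariationOn.Icc_add_Icc f (s := univ) hs hst (mem_univ _)
      have a2 := eVariationOn.Icc_add_Icc f (s := univ) (hs.trans hst) ht (mem_univ _)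
      simp only [univ_inter] at a1 a2
      rw [a1, a2]
    have b1 : ENNReal.ofReal (l1 (g 0 - g s)) ≤ eVariationOn f (Icc 0 s) := by
      rw [← edist_toLp]
      exact eVariationOn.edist_le f ⟨le_rfl, hs⟩ ⟨hs, le_rfl⟩
    have b2 : ENNReal.ofReal (l1 (g s - g t)) ≤ eVariationOn f (Icc s t) := by
      rw [← edist_toLp]
      exact eVariationOn.edist_le f ⟨le_rfl, hst⟩ ⟨hst, le_rfl⟩
    have b3 : ENNReal.ofReal (l1 (g t - g 1)) ≤ eVariationOn f (Icc t 1) := by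
      rw [← edist_toLp]
      exact eVariationOn.edist_le f ⟨le_rfl, ht⟩ ⟨ht, le_rfl⟩
    have tot := (add_le_add (add_le_add b1 b2) b3).trans (e1.symm.le.trans h)
    rw [← ENNReal.ofReal_add (l1_nonneg _) (l1_nonneg _),
      ← ENNReal.ofReal_add (add_nonneg (l1_nonneg _) (l1_nonneg _)) (l1_nonneg _),
      ENNReal.ofReal_le_ofReal_iff (l1_nonneg _)] at tot
    exact tot
  have coord : ∀ a b c d : ℝ, |a - d| ≤ |a - b| + |b - c| + |c - d| := by
    intro a b c d
    have := abs_sub_le a b d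
    have := abs_sub_le b c d
    linarith
  have mono1 : ∀ a b c d : ℝ, |a - b| + |b - c| + |c - d| ≤ |a - d| → a ≤ d → b ≤ c := by
    intro a b c d h had
    rw [abs_of_nonpos (show a - d ≤ 0 by linarith)] at h
    have := neg_abs_le (a - b)
    have := neg_abs_le (c - d)
    have := le_abs_self (b - c)
    linarith
  have mono2 : ∀ a b c d : ℝ, |a - b| + |b - c| + |c - d| ≤ |a - d| → d ≤ a → c ≤ b := by
    intro a b c d h had
    rw [abs_of_nonneg (show 0 ≤ a - d by linarith)] at h
    have := le_abs_self (a - b)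
    have := le_abs_self (c - d)
    have := neg_abs_le (b - c)
    linarith
  have keyx : ∀ s t, 0 ≤ s → s ≤ t → t ≤ 1 → |(g 0).1 - (g s).1| + |(g s).1 - (g t).1| +
      |(g t).1 - (g 1).1| ≤ |(g 0).1 - (g 1).1| := by
    intro s t hs hst ht
    have := key s t hs hst ht
    simp only [l1, Prod.fst_sub, Prod.snd_sub] at this
    linarith [coord (g 0).2 (g s).2 (g t).2 (g 1).2]
  have keyy : ∀ s t, 0 ≤ s → s ≤ t → t ≤ 1 → |(g 0).2 - (g s).2| + |(g s).2 - (g t).2| +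
      |(g t).2 - (g 1).2| ≤ |(g 0).2 - (g 1).2| := by
    intro s t hs hst ht
    have := key s t hs hst ht
    simp only [l1, Prod.fst_sub, Prod.snd_sub] at this
    linarith [coord (g 0).1 (g s).1 (g t).1 (g 1).1]
  constructor
  · rcases le_total (g 0).1 (g 1).1 with h | h
    · exact Or.inl fun s hs t ht hst => mono1 _ _ _ _ (keyx s t hs.1 hst ht.2) h
    · exact Or.inr fun s hs t ht hst => mono2 _ _ _ _ (keyx s t hs.1 hst ht.2) h
  · rcases le_total (g 0).2 (g 1).2 with h | h
    · exact Or.inl fun s hs t ht hst => mono1 _ _ _ _ (keyy s t hs.1 hst ht.2) h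
    · exact Or.inr fun s hs t ht hst => mono2 _ _ _ _ (keyy s t hs.1 hst ht.2) h

/-- For a corridor `R` with giant component `γ(R)` of its influence
region, every shortest path in `F` between a point of `R` and a point of `γ(R)` is
xy-monotone. -/
theorem shortestPath_corridor_giant_xyMonotone
    (W : Set (ℝ × ℝ)) (hW : IsRectilinearEnv W)
    (F : Set (ℝ × ℝ)) (hF : F = freeSpace W)
    (sA sB tA tB : ℝ × ℝ)
    (P : Set (ℝ × ℝ)) (hP : P = {sA, sB, tA, tB})
    (hsA : sA ∈ F) (hsB : sB ∈ F) (htA : tA ∈ F) (htB : tB ∈ F)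
    (xlo xhi ylo yhi : ℝ) (R : Set (ℝ × ℝ))
    (hR : IsCorridor F P R) (hRrect : R = Icc xlo xhi ×ˢ Icc ylo yhi)
    (Rbox : Set (ℝ × ℝ))
    (hRbox : Rbox = Icc (xlo - 1) (xhi + 1) ×ˢ Icc (ylo - 1) (yhi + 1))
    (γR : Set (ℝ × ℝ)) (hγR : IsCompOf (F ∩ Rbox) γR) (hRsub : R ⊆ γR)
    (p q : ℝ × ℝ) (hp : p ∈ R) (hq : q ∈ γR)
    (g : ℝ → ℝ × ℝ) (hg : IsShortestPathIn F p q g) :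
    XYMonotone g := by
  subst hF hRrect hRbox
  obtain ⟨c, hc, rfl⟩ := hγR
  have hsub := connectedComponentIn_subset (freeSpace W ∩
    Icc (xlo - 1) (xhi + 1) ×ˢ Icc (ylo - 1) (yhi + 1)) c
  have hreach := reach_of_rect (freeSpace W) _ (fatCompl_freeSpace W hW.2.1.isClosed)
    isPreconnected_connectedComponentIn (hsub.trans inter_subset_left)
    xlo xhi ylo yhi hRsub (hsub.trans inter_subset_right) p q hp hq
  obtain ⟨g', hg', hlen⟩ := exists_short_path _ p q hreach
  apply xy_of_short
  rw [hg.1.2.1, hg.1.2.2.1]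
  exact (hg.2 g' hg').trans hlen

end
end

section
/- Let F ⊆ ℝ² be a closed set such that every axis-parallel segment of length at most 1 whose two endpoints lie in F is contained in F. Let p,q ∈ F and let h ⊆ F be a nondegenerate horizontal closed segment with common y-coordinate y(h) and with minimum and maximum x-coordinates x₁(h) and x₂(h). Let p′ be the point of h at minimum Euclidean distance from p and q′ the point of h at minimum Euclidean distance from q. Suppose: (i) |p₂ − y(h)| ≤ 1 and |q₂ − y(h)| ≤ 1; (ii) there exists a shortest path in F from p to p′ and every shortest path in F from p to p′ is xy-monotone, and likewise there exists a shortest path in F from q to q′ and every shortest path in F from q to q′ is xy-monotone; (iii) max(p₁,q₁) ≥ x₁(h) and min(p₁,q₁) ≤ x₂(h). Then every shortest path in F from p to q is x-monotone. -/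
open Set
open scoped ENNReal

noncomputable section

/-- There is a path in `S` from `p` to `q` of length at most `L`. -/
def Joined1 (S : Set (ℝ × ℝ)) (p q : ℝ × ℝ) (L : ℝ≥0∞) : Prop :=
  ∃ g, IsPathIn S p q g ∧ pathLen g ≤ L

lemma edist_l1 (u v : ℝ × ℝ) :
    edist ((WithLp.equiv 1 (ℝ × ℝ)).symm u) ((WithLp.equiv 1 (ℝ × ℝ)).symm v)
      = edist u.1 v.1 + edist u.2 v.2 := by
  rw [WithLp.prod_edist_eq_of_L1]; rfl

lemma edist_l1' (u v : ℝ × ℝ) :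
    edist ((WithLp.equiv 1 (ℝ × ℝ)).symm u) ((WithLp.equiv 1 (ℝ × ℝ)).symm v)
      = ENNReal.ofReal (|u.1 - v.1| + |u.2 - v.2|) := by
  rw [edist_l1, edist_dist, edist_dist, Real.dist_eq, Real.dist_eq,
    ENNReal.ofReal_add (abs_nonneg _) (abs_nonneg _)]

lemma l1VarOn_le_add (γ : ℝ → ℝ × ℝ) (s : Set ℝ) :
    l1VarOn γ s ≤ eVariationOn (fun t => (γ t).1) s + eVariationOn (fun t => (γ t).2) s := by
  unfold l1VarOn
  refine iSup_le ?_
  rintro ⟨n, u, hu, us⟩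
  simp only [edist_l1, Finset.sum_add_distrib]
  exact add_le_add (eVariationOn.sum_le (f := fun t => (γ t).1) hu us)
    (eVariationOn.sum_le (f := fun t => (γ t).2) hu us)

lemma le_l1VarOn (γ : ℝ → ℝ × ℝ) {a b : ℝ} (hab : a ≤ b) :
    ENNReal.ofReal (|(γ a).1 - (γ b).1| + |(γ a).2 - (γ b).2|) ≤ l1VarOn γ (Icc a b) := by
  rw [← edist_l1']
  exact eVariationOn.edist_le (fun t => (WithLp.equiv 1 (ℝ × ℝ)).symm (γ t))
    (left_mem_Icc.2 hab) (right_mem_Icc.2 hab)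

lemma var_le_of_monotone {f : ℝ → ℝ}
    (hf : MonotoneOn f (Icc 0 1) ∨ AntitoneOn f (Icc 0 1)) :
    eVariationOn f (Icc 0 1) ≤ ENNReal.ofReal |f 0 - f 1| := by
  have h0 : (0 : ℝ) ∈ Icc (0 : ℝ) 1 := by simp
  have h1 : (1 : ℝ) ∈ Icc (0 : ℝ) 1 := by simp
  rcases hf with hf | hf
  · have := (hf.eVariationOn_eq h0 h1).le
    rw [inter_self] at this
    refine this.trans (ENNReal.ofReal_le_ofReal ?_)
    rw [abs_sub_comm]; exact le_abs_self _
  · have h2 : MonotoneOn (fun t => f (1 - t)) (Icc 0 1) := by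
      intro x hx y hy hxy
      exact hf ⟨by linarith [hy.2], by linarith [hy.1]⟩
        ⟨by linarith [hx.2], by linarith [hx.1]⟩ (by linarith)
    have := (h2.eVariationOn_eq h0 h1).le
    rw [inter_self] at this
    have h3 : eVariationOn ((fun t => f (1 - t)) ∘ fun t : ℝ => 1 - t) (Icc 0 1)
        ≤ eVariationOn (fun t => f (1 - t)) (Icc 0 1) :=
      eVariationOn.comp_le_of_antitoneOn _ _ (fun x _ y _ hxy => by simp; linarith)
        (fun x hx => ⟨by simp; linarith [hx.2], by simp; linarith [hx.1]⟩)
    have h4 : ((fun t => f (1 - t)) ∘ fun t : ℝ => 1 - t) = f := by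
      ext t; simp
    rw [h4] at h3
    refine (h3.trans this).trans (ENNReal.ofReal_le_ofReal ?_)
    simpa using le_abs_self (f 0 - f 1)

lemma pathLen_le_of_mono {γ : ℝ → ℝ × ℝ} (h : XYMonotone γ) :
    pathLen γ ≤ ENNReal.ofReal (|(γ 0).1 - (γ 1).1| + |(γ 0).2 - (γ 1).2|) := by
  rw [ENNReal.ofReal_add (abs_nonneg _) (abs_nonneg _)]
  exact (l1VarOn_le_add γ _).trans
    (add_le_add (var_le_of_monotone h.1) (var_le_of_monotone h.2))

lemma Joined1.symm {S : Set (ℝ × ℝ)} {p q : ℝ × ℝ} {L : ℝ≥0∞} (h : Joined1 S p q L) :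
    Joined1 S q p L := by
  obtain ⟨g, ⟨hc, h0, h1, hS⟩, hL⟩ := h
  have hm : MapsTo (fun t : ℝ => 1 - t) (Icc 0 1) (Icc 0 1) :=
    fun x hx => ⟨by simp; linarith [hx.2], by simp; linarith [hx.1]⟩
  refine ⟨fun t => g (1 - t), ⟨hc.comp (by fun_prop) hm, by simpa using h1, by simpa using h0,
    fun t ht => hS _ (hm ht)⟩, le_trans ?_ hL⟩
  exact eVariationOn.comp_le_of_antitoneOn (fun t => (WithLp.equiv 1 (ℝ × ℝ)).symm (g t))
    (fun t : ℝ => 1 - t) (fun x _ y _ hxy => by simp; linarith) hm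

lemma joined1_restrict {S : Set (ℝ × ℝ)} {p q : ℝ × ℝ} {g : ℝ → ℝ × ℝ} (h : IsPathIn S p q g)
    {s t : ℝ} (hs : 0 ≤ s) (hst : s ≤ t) (ht : t ≤ 1) :
    Joined1 S (g s) (g t) (l1VarOn g (Icc s t)) := by
  obtain ⟨hc, h0, h1, hS⟩ := h
  have hm : MapsTo (fun r : ℝ => s + r * (t - s)) (Icc 0 1) (Icc s t) := by
    intro r hr
    constructor
    · simp only; nlinarith [hr.1]
    · simp only; nlinarith [hr.2]
  have hsub : Icc s t ⊆ Icc 0 1 := Icc_subset_Icc hs ht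
  refine ⟨fun r => g (s + r * (t - s)), ⟨hc.comp (by fun_prop) (hm.mono_right hsub), by simp,
    by simp, fun r hr => hS _ (hsub (hm hr))⟩, ?_⟩
  exact eVariationOn.comp_le_of_monotoneOn (fun t => (WithLp.equiv 1 (ℝ × ℝ)).symm (g t))
    (fun r : ℝ => s + r * (t - s)) (fun x _ y _ hxy => by simp only; nlinarith) hm

lemma Joined1.trans {S : Set (ℝ × ℝ)} {p q r : ℝ × ℝ} {L M : ℝ≥0∞} (h : Joined1 S p q L)
    (h' : Joined1 S q r M) : Joined1 S p r (L + M) := by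
  obtain ⟨g, ⟨hc, h0, h1, hS⟩, hL⟩ := h
  obtain ⟨k, ⟨kc, k0, k1, kS⟩, hM⟩ := h'
  have hm : MapsTo (fun t : ℝ => 2 * t) (Icc 0 (1/2)) (Icc 0 1) :=
    fun x hx => ⟨by simp only; linarith [hx.1], by simp only; linarith [hx.2]⟩
  have km : MapsTo (fun t : ℝ => 2 * t - 1) (Icc (1/2) 1) (Icc 0 1) :=
    fun x hx => ⟨by simp only; linarith [hx.1], by simp only; linarith [hx.2]⟩
  set f : ℝ → ℝ × ℝ := fun t => if t ≤ 1/2 then g (2 * t) else k (2 * t - 1) with hf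
  have e1 : EqOn f (fun t => g (2 * t)) (Icc 0 (1/2)) := fun t ht => if_pos ht.2
  have e2 : EqOn f (fun t => k (2 * t - 1)) (Icc (1/2) 1) := by
    intro t ht
    by_cases h : t ≤ 1/2
    · have : t = 1/2 := le_antisymm h ht.1
      subst this
      simp [hf, h1, k0]
    · exact if_neg h
  have hu : Icc (0 : ℝ) 1 = Icc 0 (1/2) ∪ Icc (1/2) 1 :=
    (Icc_union_Icc_eq_Icc (by norm_num) (by norm_num)).symm
  have c1 : ContinuousOn f (Icc 0 (1/2)) := (hc.comp (by fun_prop) hm).congr e1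
  have c2 : ContinuousOn f (Icc (1/2) 1) := (kc.comp (by fun_prop) km).congr e2
  refine ⟨f, ⟨?_, ?_, ?_, ?_⟩, ?_⟩
  · rw [hu]; exact c1.union_of_isClosed c2 isClosed_Icc isClosed_Icc
  · rw [e1 ⟨le_rfl, by norm_num⟩]; simpa using h0
  · rw [e2 ⟨by norm_num, le_rfl⟩]; simp only; norm_num [k1]
  · intro t ht
    rw [hu] at ht
    rcases ht with ht | ht
    · rw [e1 ht]; exact hS _ (hm ht)
    · rw [e2 ht]; exact kS _ (km ht)
  · unfold pathLen
    rw [← l1VarOn_add f (a := 0) (b := 1/2) (c := 1) (by norm_num) (by norm_num)]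
    refine add_le_add (le_trans ?_ hL) (le_trans ?_ hM)
    · unfold l1VarOn pathLen
      rw [eVariationOn.congr (g := (fun t => (WithLp.equiv 1 (ℝ × ℝ)).symm (g t)) ∘
        fun t : ℝ => 2 * t) (fun t ht => by simp only [e1 ht, Function.comp])]
      exact eVariationOn.comp_le_of_monotoneOn _ _
        (fun x _ y _ hxy => by linarith) hm
    · unfold l1VarOn pathLen
      rw [eVariationOn.congr (g := (fun t => (WithLp.equiv 1 (ℝ × ℝ)).symm (k t)) ∘
        fun t : ℝ => 2 * t - 1) (fun t ht => by simp only [e2 ht, Function.comp])]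
      exact eVariationOn.comp_le_of_monotoneOn _ _
        (fun x _ y _ hxy => by linarith) km

lemma affine_mono (a b : ℝ) :
    MonotoneOn (fun t : ℝ => a + t * (b - a)) (Icc 0 1) ∨
      AntitoneOn (fun t : ℝ => a + t * (b - a)) (Icc 0 1) := by
  rcases le_total a b with h | h
  · left; intro x _ y _ hxy; simp only; nlinarith
  · right; intro x _ y _ hxy; simp only; nlinarith

lemma joined1_segment {S : Set (ℝ × ℝ)} {p q : ℝ × ℝ} (h : segment ℝ p q ⊆ S) :
    Joined1 S p q (ENNReal.ofReal (|p.1 - q.1| + |p.2 - q.2|)) := by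
  refine ⟨fun t => (p.1 + t * (q.1 - p.1), p.2 + t * (q.2 - p.2)),
    ⟨by fun_prop, by simp, by simp, ?_⟩, ?_⟩
  · intro t ht
    apply h
    rw [segment_eq_image']
    exact ⟨t, ht, by ext <;> simp⟩
  · refine (pathLen_le_of_mono
      (γ := fun t => (p.1 + t * (q.1 - p.1), p.2 + t * (q.2 - p.2)))
      ⟨affine_mono p.1 q.1, affine_mono p.2 q.2⟩).trans ?_
    simp

lemma exists_return {f : ℝ → ℝ} (hf : ContinuousOn f (Icc 0 1))
    (h : ¬ (MonotoneOn f (Icc 0 1) ∨ AntitoneOn f (Icc 0 1))) :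
    ∃ s t r : ℝ, 0 ≤ s ∧ s ≤ t ∧ t ≤ r ∧ r ≤ 1 ∧ f s = f r ∧ f t ≠ f s := by
  rw [not_or, not_monotoneOn_not_antitoneOn_iff_exists_le_le] at h
  obtain ⟨s, hs, t, ht, r, hr, hst, htr, h⟩ := h
  have c1 : ContinuousOn f (Icc s t) := hf.mono (Icc_subset_Icc hs.1 ht.2)
  have c2 : ContinuousOn f (Icc t r) := hf.mono (Icc_subset_Icc ht.1 hr.2)
  rcases h with ⟨h1, h2⟩ | ⟨h1, h2⟩
  · rcases le_total (f s) (f r) with h3 | h3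
    · obtain ⟨x, hx, e⟩ := intermediate_value_Icc hst c1 ⟨h3, h2.le⟩
      exact ⟨x, t, r, hs.1.trans hx.1, hx.2, htr, hr.2, e, by rw [e]; exact h2.ne'⟩
    · obtain ⟨x, hx, e⟩ := intermediate_value_Icc' htr c2 ⟨h3, h1.le⟩
      exact ⟨s, t, x, hs.1, hst, hx.1, hx.2.trans hr.2, e.symm, h1.ne'⟩
  · rcases le_total (f s) (f r) with h3 | h3
    · obtain ⟨x, hx, e⟩ := intermediate_value_Icc htr c2 ⟨h1.le, h3⟩
      exact ⟨s, t, x, hs.1, hst, hx.1, hx.2.trans hr.2, e.symm, h1.ne⟩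
    · obtain ⟨x, hx, e⟩ := intermediate_value_Icc' hst c1 ⟨h2.le, h3⟩
      exact ⟨x, t, r, hs.1.trans hx.1, hx.2, htr, hr.2, e, by rw [e]; exact h2.ne⟩

lemma nearest_clamp {a b yh : ℝ} (hab : a < b) {p p' : ℝ × ℝ}
    (hmem : p' ∈ Icc a b ×ˢ ({yh} : Set ℝ))
    (hmin : ∀ z ∈ Icc a b ×ˢ ({yh} : Set ℝ), euclDist p p' ≤ euclDist p z) :
    p'.2 = yh ∧ a ≤ p'.1 ∧ p'.1 ≤ b ∧ (p.1 ≤ a → p'.1 = a) ∧ (b ≤ p.1 → p'.1 = b) ∧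
      (a ≤ p.1 → p.1 ≤ b → p'.1 = p.1) := by
  obtain ⟨⟨h1, h2⟩, h3⟩ := hmem
  simp only [mem_singleton_iff] at h3
  have key : ∀ x, a ≤ x → x ≤ b → (p.1 - p'.1) ^ 2 ≤ (p.1 - x) ^ 2 := by
    intro x hx hx'
    have := hmin (x, yh) ⟨⟨hx, hx'⟩, rfl⟩
    unfold euclDist at this
    rw [Real.sqrt_le_sqrt_iff (by positivity), h3] at this
    simpa using this
  refine ⟨h3, h1, h2, fun h => ?_, fun h => ?_, fun h h' => ?_⟩
  · have := key a le_rfl hab.le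
    nlinarith
  · have := key b hab.le le_rfl
    nlinarith
  · have := key p.1 h h'
    nlinarith

lemma clamp_sum {a b : ℝ} (hab : a < b) {x y x' y' : ℝ}
    (hx : a ≤ x' ∧ x' ≤ b ∧ (x ≤ a → x' = a) ∧ (b ≤ x → x' = b) ∧ (a ≤ x → x ≤ b → x' = x))
    (hy : a ≤ y' ∧ y' ≤ b ∧ (y ≤ a → y' = a) ∧ (b ≤ y → y' = b) ∧ (a ≤ y → y ≤ b → y' = y))
    (h1 : a ≤ max x y) (h2 : min x y ≤ b) :
    |x - x'| + |x' - y'| + |y' - y| ≤ |x - y| := by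
  obtain ⟨-, -, x1, x2, x3⟩ := hx
  obtain ⟨-, -, y1, y2, y3⟩ := hy
  rw [le_max_iff] at h1
  rw [min_le_iff] at h2
  grind

/-- Under the stated hypotheses on `F`, `p`, `q` and the horizontal
segment `h`, every shortest path in `F` from `p` to `q` is x-monotone. -/
theorem shortestPath_xMonotone_of_horizontal_segment
    (F : Set (ℝ × ℝ)) (hFclosed : IsClosed F)
    (hseg : ∀ p q : ℝ × ℝ, p ∈ F → q ∈ F → (p.1 = q.1 ∨ p.2 = q.2) → l1 (p - q) ≤ 1 →
      segment ℝ p q ⊆ F)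
    (p q : ℝ × ℝ) (hp : p ∈ F) (hq : q ∈ F)
    (a b yh : ℝ) (hab : a < b)
    (h : Set (ℝ × ℝ)) (hh : h = Icc a b ×ˢ ({yh} : Set ℝ)) (hhF : h ⊆ F)
    (p' : ℝ × ℝ) (hp'mem : p' ∈ h) (hp'min : ∀ z ∈ h, euclDist p p' ≤ euclDist p z)
    (q' : ℝ × ℝ) (hq'mem : q' ∈ h) (hq'min : ∀ z ∈ h, euclDist q q' ≤ euclDist q z)
    (hip : |p.2 - yh| ≤ 1) (hiq : |q.2 - yh| ≤ 1)
    (hiip : (∃ g, IsShortestPathIn F p p' g) ∧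
      ∀ g, IsShortestPathIn F p p' g → XYMonotone g)
    (hiiq : (∃ g, IsShortestPathIn F q q' g) ∧
      ∀ g, IsShortestPathIn F q q' g → XYMonotone g)
    (hiii₁ : a ≤ max p.1 q.1) (hiii₂ : min p.1 q.1 ≤ b)
    (g : ℝ → ℝ × ℝ) (hg : IsShortestPathIn F p q g) :
    XMonotone g := by
  subst hh
  obtain ⟨hgp, hgmin⟩ := hg
  have hcp := nearest_clamp hab hp'mem hp'min
  have hcq := nearest_clamp hab hq'mem hq'min
  have hp2 := hcp.1
  have hq2 := hcq.1
  -- the path through `h`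
  have jp : Joined1 F p p' (ENNReal.ofReal (|p.1 - p'.1| + |p.2 - p'.2|)) := by
    obtain ⟨⟨k, hk⟩, hall⟩ := hiip
    have := pathLen_le_of_mono (hall k hk)
    rw [hk.1.2.1, hk.1.2.2.1] at this
    exact ⟨k, hk.1, this⟩
  have jq : Joined1 F q q' (ENNReal.ofReal (|q.1 - q'.1| + |q.2 - q'.2|)) := by
    obtain ⟨⟨k, hk⟩, hall⟩ := hiiq
    have := pathLen_le_of_mono (hall k hk)
    rw [hk.1.2.1, hk.1.2.2.1] at this
    exact ⟨k, hk.1, this⟩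
  have jh : Joined1 F p' q' (ENNReal.ofReal (|p'.1 - q'.1| + |p'.2 - q'.2|)) := by
    apply joined1_segment
    refine Subset.trans ?_ hhF
    exact ((convex_Icc a b).prod (convex_singleton yh)).segment_subset hp'mem hq'mem
  obtain ⟨k, hk, hkL⟩ := (jp.trans jh).trans jq.symm
  have hlen : pathLen g ≤ ENNReal.ofReal (|p.1 - q.1| + |p.2 - yh| + |q.2 - yh|) := by
    refine ((hgmin k hk).trans hkL).trans ?_
    rw [← ENNReal.ofReal_add (by positivity) (by positivity),
      ← ENNReal.ofReal_add (by positivity) (by positivity)]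
    apply ENNReal.ofReal_le_ofReal
    have := clamp_sum hab hcp.2 hcq.2 hiii₁ hiii₂
    rw [hp2, hq2, sub_self, abs_zero, abs_sub_comm q.1 q'.1]
    linarith
  by_contra hcon
  have hfc : ContinuousOn (fun t => (g t).1) (Icc 0 1) := continuous_fst.comp_continuousOn hgp.1
  obtain ⟨s, t, r, hs, hst, htr, hr, hsr, hne⟩ := exists_return hfc hcon
  have d1 : l1VarOn g (Icc 0 s) + l1VarOn g (Icc s r) + l1VarOn g (Icc r 1) = pathLen g := by
    rw [l1VarOn_add g hs (hst.trans htr), l1VarOn_add g (hs.trans (hst.trans htr)) hr]; rfl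
  have d2 := l1VarOn_add g hst htr
  have b1 := le_l1VarOn g hs
  have b2 := le_l1VarOn g hst
  have b3 := le_l1VarOn g htr
  have b4 := le_l1VarOn g hr
  rw [hgp.2.1] at b1
  rw [hgp.2.2.1] at b4
  have hpos : 0 < |(g t).1 - (g s).1| := abs_pos.2 (sub_ne_zero.2 hne)
  have b23 : ENNReal.ofReal (2 * |(g t).1 - (g s).1| + |(g s).2 - (g r).2|) ≤
      l1VarOn g (Icc s r) := by
    rw [← d2]
    refine le_trans ?_ (add_le_add b2 b3)
    rw [← ENNReal.ofReal_add (by positivity) (by positivity)]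
    apply ENNReal.ofReal_le_ofReal
    rw [← hsr, abs_sub_comm (g s).1 (g t).1]
    linarith [abs_sub_le (g s).2 (g t).2 (g r).2]
  have hfin : pathLen g ≠ ⊤ := ne_top_of_le_ne_top ENNReal.ofReal_ne_top hlen
  have hreal : (|p.1 - (g s).1| + |p.2 - (g s).2|) +
      (2 * |(g t).1 - (g s).1| + |(g s).2 - (g r).2|) + (|(g r).1 - q.1| + |(g r).2 - q.2|)
      ≤ |p.1 - q.1| + |p.2 - yh| + |q.2 - yh| := by
    rw [← ENNReal.ofReal_le_ofReal_iff (by positivity)]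
    rw [ENNReal.ofReal_add (by positivity) (by positivity),
      ENNReal.ofReal_add (by positivity) (by positivity)]
    exact (add_le_add (add_le_add b1 b23) b4).trans (d1.le.trans hlen)
  rw [← hsr] at hreal
  have tx := abs_sub_le p.1 (g s).1 q.1
  have hy : |p.2 - (g s).2| + |(g s).2 - (g r).2| + |(g r).2 - q.2| <
      |p.2 - yh| + |q.2 - yh| := by linarith
  have hvert : |(g s).2 - (g r).2| ≤ 1 := by
    generalize (g s).2 = u at *
    generalize (g r).2 = v at *
    clear hreal tx b1 b2 b3 b4 b23 hlen
    rw [abs_le] at hip hiq ⊢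
    have A1 := le_abs_self (p.2 - u)
    have A2 := neg_abs_le (p.2 - u)
    have A3 := le_abs_self (u - v)
    have A4 := neg_abs_le (u - v)
    have A5 := le_abs_self (v - q.2)
    have A6 := neg_abs_le (v - q.2)
    rcases abs_cases (p.2 - yh) with ⟨e1, _⟩ | ⟨e1, _⟩ <;>
    rcases abs_cases (q.2 - yh) with ⟨e2, _⟩ | ⟨e2, _⟩ <;>
    constructor <;> linarith
  have hsm : g s ∈ F := hgp.2.2.2 s ⟨hs, (hst.trans htr).trans hr⟩
  have hrm : g r ∈ F := hgp.2.2.2 r ⟨hs.trans (hst.trans htr), hr⟩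
  have hsegF := hseg (g s) (g r) hsm hrm (Or.inl hsr) (by
    simp only [l1, Prod.fst_sub, Prod.snd_sub, hsr, sub_self, abs_zero, zero_add]
    exact hvert)
  have j1 := joined1_restrict hgp le_rfl hs ((hst.trans htr).trans hr)
  have j3 := joined1_restrict hgp (hs.trans (hst.trans htr)) hr le_rfl
  rw [hgp.2.1] at j1
  rw [hgp.2.2.1] at j3
  obtain ⟨m, hm, hmL⟩ := (j1.trans (joined1_segment hsegF)).trans j3
  have hle := (hgmin m hm).trans hmL
  rw [← d1] at hle hfin
  have f3 : l1VarOn g (Icc r 1) ≠ ⊤ := fun h => hfin (by simp [h])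
  have f1 : l1VarOn g (Icc 0 s) ≠ ⊤ := fun h => hfin (by simp [h])
  rw [ENNReal.add_le_add_iff_right f3, ENNReal.add_le_add_iff_left f1] at hle
  have := b23.trans hle
  rw [ENNReal.ofReal_le_ofReal_iff (by positivity), hsr, sub_self, abs_zero] at this
  rw [← hsr] at this
  linarith

end
end
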